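/- arXiv:2306.07161 — 2 statements merged into one kernel-verified Lean document; each statement's English description precedes it below -/
import Mathlib

section
/- Fix integers d ≥ 17 and x such that 1 + ⌈3d/2⌉ < x < 2d. Then T(3,d;x)' = ∅. -/
open MvPolynomial

noncomputable section

/-- Projective `n`-space over `k`, as the projectivization of `k^(n+1)`. -/
abbrev ProjSpace (k : Type*) [Field k] (n : ℕ) := Projectivization k (Fin (n+1) → k)

variable (k : Type*) [Field k]

/-- Evaluation at a vector, as a linear map on polynomials. -/
def evalLM {n : ℕ} (v : Fin n → k) : MvPolynomial (Fin n) k →ₗ[k] k :=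
  (MvPolynomial.aeval v).toLinearMap

/-- The submodule of polynomials vanishing together with all first partial derivatives at `v`. -/
def doubleVanishing {n : ℕ} (v : Fin n → k) : Submodule k (MvPolynomial (Fin n) k) :=
  LinearMap.ker (evalLM k v) ⊓
    ⨅ i : Fin n, LinearMap.ker ((evalLM k v).comp (MvPolynomial.pderiv i).toLinearMap)

/-- `h^0(I_{2S}(d))`: dimension of degree-`d` forms vanishing doubly at all points of `S`. -/
def h0 (n d : ℕ) (S : Finset (ProjSpace k n)) : ℕ :=
  Module.finrank k
    ↥(homogeneousSubmodule (Fin (n+1)) k d ⊓ ⨅ p ∈ S, doubleVanishing k p.rep)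

/-- `h^1(I_{2S}(d)) = h^0(I_{2S}(d)) + (n+1)#S - C(n+d,n)`. -/
def h1 (n d : ℕ) (S : Finset (ProjSpace k n)) : ℤ :=
  (h0 k n d S : ℤ) + (n+1) * S.card - (n+d).choose n

/-- `S` spans `P^n`: it is contained in no hyperplane. -/
def Spans (n : ℕ) (S : Finset (ProjSpace k n)) : Prop :=
  Submodule.span k (Projectivization.rep '' (S : Set (ProjSpace k n))) = ⊤

/-- The Terracini locus `T(n,d;x)`. -/
def Terracini (n d x : ℕ) : Set (Finset (ProjSpace k n)) :=
  {S | S.card = x ∧ Spans k n S ∧ 0 < h0 k n d S ∧ 0 < h1 k n d S}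

/-- The minimally Terracini locus `T(n,d;x)'`. -/
def minTerracini (n d x : ℕ) : Set (Finset (ProjSpace k n)) :=
  {S | S ∈ Terracini k n d x ∧ ∀ A : Finset (ProjSpace k n), A ⊂ S → h1 k n d A = 0}

end

/-!
By duality and Euler's formula, `h¹ > 0` means that, in an affine chart containing the points, some
non-trivial combination of values and tangential derivatives at the points kills all forms of degree
`d`; by minimality every such relation involves every point.

The algebra `A` of jets along the relation, the image of the polynomials in a product of dual
numbers, has dimension at most `2x` and is filtered by the powers of the image `U` of the linear
forms. The relation is a functional on `A` whose product form is nondegenerate; `U ^ s` is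
orthogonal to `U ^ (d - s)`, and only the constants are orthogonal to `U ^ d`. With the resulting
symmetry, `2x + 2 ≤ 4d` and the concavity of `t ↦ dim (U ^ t)` after a small step (as for Macaulay's
bound), `dim (U ^ 2) ≤ 7`. Then one `y ∈ U` satisfies `U ^ 2 = U + y U`, and all steps are at most
`3`.

Where the relation has no derivative term, the determinant trick supplies a tangent direction that
can be adjoined without enlarging the space of jets of cubics, so the new jets of degree `d` forms
have dimension at most `3d + 1`. By minimality they have codimension at most `2` in the space of all
jets, of dimension `2x`; hence `2x ≤ 3d + 3`.
-/

open Module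

noncomputable section

section LinearAlgebra

variable {k V W : Type*} [Field k] [AddCommGroup V] [Module k V] [AddCommGroup W] [Module k W]

lemma finrank_map_add_finrank_inf_ker (f : V →ₗ[k] W) (S : Submodule k V)
    [FiniteDimensional k S] :
    finrank k ↥(S.map f) + finrank k ↥(S ⊓ LinearMap.ker f) = finrank k S := by
  have hker : LinearMap.ker (f.domRestrict S) = (S ⊓ LinearMap.ker f).comap S.subtype := by
    ext; simp
  rw [← LinearMap.finrank_range_add_finrank_ker (f.domRestrict S), LinearMap.range_domRestrict,
    hker, (Submodule.comapSubtypeEquivOfLe inf_le_left).finrank_eq]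

lemma finrank_map_le_finrank_map {W' : Type*} [AddCommGroup W'] [Module k W'] (f : V →ₗ[k] W)
    (g : V →ₗ[k] W') (S : Submodule k V) [FiniteDimensional k S]
    (hfg : ∀ x ∈ S, f x = 0 → g x = 0) : finrank k ↥(S.map g) ≤ finrank k ↥(S.map f) := by
  have hf := finrank_map_add_finrank_inf_ker f S
  have hg := finrank_map_add_finrank_inf_ker g S
  have hle : S ⊓ LinearMap.ker f ≤ S ⊓ LinearMap.ker g := fun x hx => ⟨hx.1, hfg x hx.1 hx.2⟩
  have : FiniteDimensional k ↥(S ⊓ LinearMap.ker g) :=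
    Submodule.finiteDimensional_of_le inf_le_left
  have := Submodule.finrank_mono hle
  omega

lemma finrank_sup_map_add_finrank_inf_comap [FiniteDimensional k V] (f : V →ₗ[k] V)
    (N : Submodule k V) :
    finrank k ↥(N ⊔ N.map f) + finrank k ↥(N ⊓ N.comap f) = 2 * finrank k N := by
  have hinf : N ⊓ N.map f = (N ⊓ N.comap f).map f := by
    rw [inf_comm, Submodule.map_inf_eq_map_inf_comap]
  have hker : N ⊓ N.comap f ⊓ LinearMap.ker f = N ⊓ LinearMap.ker f := by
    rw [inf_assoc, inf_eq_right.mpr (LinearMap.ker_le_comap f)]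
  have h₁ := Submodule.finrank_sup_add_finrank_inf_eq N (N.map f)
  have h₂ := finrank_map_add_finrank_inf_ker f (N ⊓ N.comap f)
  have h₃ := finrank_map_add_finrank_inf_ker f N
  rw [hinf] at h₁
  rw [hker] at h₂
  omega

lemma exists_mem_forall_notMem [Infinite k] {ι : Type*} [Finite ι] (U : Submodule k V)
    (p : ι → Submodule k V) (hp : ∀ i, ¬ U ≤ p i) : ∃ y ∈ U, ∀ i, y ∉ p i := by
  obtain ⟨y, hy⟩ := Submodule.exists_forall_notMem_of_forall_ne_top
    (fun i => (p i).comap U.subtype) fun i h => hp i (Submodule.comap_subtype_eq_top.mp h)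
  exact ⟨y, y.2, hy⟩

lemma finrank_add_le_of_triangular [FiniteDimensional k V] (n : ℕ) (v : ℕ → V)
    (K : ℕ → Submodule k V) (N W : Submodule k V) (hNW : N ≤ W) (hvW : ∀ i < n, v i ∈ W)
    (hNK : ∀ i < n, N ≤ K i) (hlower : ∀ j < n, ∀ i < j, v i ∈ K j) (hdiag : ∀ i < n, v i ∉ K i) :
    finrank k N + n ≤ finrank k W := by
  induction n generalizing W with
  | zero => exact Submodule.finrank_mono hNW
  | succ n ih =>
    have hstep : finrank k N + n ≤ finrank k ↥(W ⊓ K n) :=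
      ih (W ⊓ K n) (le_inf hNW (hNK n n.lt_succ_self))
        (fun i hi => ⟨hvW i (hi.trans n.lt_succ_self), hlower n n.lt_succ_self i hi⟩)
        (fun i hi => hNK i (hi.trans n.lt_succ_self))
        (fun j hj => hlower j (hj.trans n.lt_succ_self))
        (fun i hi => hdiag i (hi.trans n.lt_succ_self))
    have hlt : W ⊓ K n < W :=
      lt_of_le_of_ne inf_le_left fun h =>
        hdiag n n.lt_succ_self (inf_eq_left.mp h (hvW n n.lt_succ_self))
    have := Submodule.finrank_lt_finrank_of_lt hlt
    omega

end LinearAlgebra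

section Filtration

variable {k A : Type*} [Field k] [CommRing A] [Algebra k A]

lemma prod_mem_pow_card {ι : Type*} (U : Submodule k A) (s : Finset ι) (y : ι → A)
    (hy : ∀ i ∈ s, y i ∈ U) : ∏ i ∈ s, y i ∈ U ^ s.card := by
  classical
  induction s using Finset.induction_on with
  | empty => simpa using ⟨(1 : k), map_one (algebraMap k A)⟩
  | insert a s ha ih =>
    rw [Finset.prod_insert ha, Finset.card_insert_of_notMem ha, pow_succ']
    exact Submodule.mul_mem_mul (hy a (by simp)) (ih fun i hi => hy i (by simp [hi]))

lemma span_one_pair_mul (y : A) (N : Submodule k A) :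
    Submodule.span k {1, y} * N = N ⊔ N.map (LinearMap.mulLeft k y) := by
  have hmap : Submodule.span k {y} * N = N.map (LinearMap.mulLeft k y) := by
    ext x
    rw [Submodule.mem_span_singleton_mul]
    rfl
  rw [Submodule.span_insert, Submodule.sup_mul, ← Submodule.one_eq_span, one_mul, hmap]

-- The `y i` are chosen one after the other, each avoiding the colon submodules `K' / U ^ (s + i)`.
lemma exists_seq_not_pow_le_comap [Infinite k] (U : Submodule k A) (K : A → Submodule k A)
    (j s : ℕ) (hK : ∀ y ∈ U, ¬ U ^ (s + j) ≤ K y) :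
    ∃ y : ℕ → A, (∀ i ≤ j, y i ∈ U) ∧ ∀ i ≤ j, ¬ U ^ (s + i) ≤
      (K (y i)).comap (LinearMap.mulLeft k (∏ m ∈ Finset.Ioc i j, y m)) := by
  induction j generalizing s with
  | zero =>
    refine ⟨fun _ => 0, fun _ _ => U.zero_mem, fun i hi => ?_⟩
    obtain rfl := Nat.le_zero.mp hi
    simpa [Submodule.comap_id] using hK 0 U.zero_mem
  | succ j ih =>
    obtain ⟨y, hyU, hy⟩ := ih (s + 1) (by simpa only [add_right_comm, ← add_assoc] using hK)
    let K' : ℕ → Submodule k A := fun i =>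
      (K (y i)).comap (LinearMap.mulLeft k (∏ m ∈ Finset.Ioc i j, y m))
    obtain ⟨a, haU, ha⟩ := exists_mem_forall_notMem U
      (fun i : Fin (j + 1) => K' i / U ^ (s + i.1)) fun i hle => by
        rw [Submodule.le_div_iff_mul_le, ← pow_succ', add_right_comm] at hle
        exact hy i (Nat.le_of_lt_succ i.2) hle
    have hprod (i : ℕ) (hi : i ≤ j) : ∏ m ∈ Finset.Ioc i (j + 1), Function.update y (j + 1) a m
        = (∏ m ∈ Finset.Ioc i j, y m) * a := by
      rw [Finset.prod_Ioc_succ_top (by omega), Function.update_self]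
      congr 1
      refine Finset.prod_congr rfl fun m hm => Function.update_of_ne ?_ _ _
      have := (Finset.mem_Ioc.mp hm).2
      omega
    refine ⟨Function.update y (j + 1) a, fun i hi => ?_, fun i hi hle => ?_⟩
    · rcases Nat.le_succ_iff.mp hi with hij | rfl
      · rw [Function.update_of_ne (by omega)]
        exact hyU i hij
      · rwa [Function.update_self]
    · rcases Nat.le_succ_iff.mp hi with hij | rfl
      · rw [hprod i hij, Function.update_of_ne (by omega)] at hle
        refine ha ⟨i, by omega⟩ (Submodule.mem_div_iff_forall_mul_mem.mpr fun g hg => ?_)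
        simpa [K', mul_assoc] using hle hg
      · refine hK a haU ?_
        simpa [Submodule.comap_id] using hle

lemma exists_pow_succ_le_span_mul [Infinite k] [FiniteDimensional k A] (U : Submodule k A)
    (h1 : 1 ≤ U) (t : ℕ) (ht : finrank k ↥(U ^ (t + 1)) ≤ finrank k ↥(U ^ t) + (t + 1)) :
    ∃ y ∈ U, U ^ (t + 1) ≤ Submodule.span k {1, y} * U ^ t := by
  by_contra! hK
  obtain ⟨y, hyU, hy⟩ := exists_seq_not_pow_le_comap U
    (fun y => Submodule.span k {1, y} * U ^ t) (t + 1) 0 (by simpa only [zero_add] using hK)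
  have hex (i : ℕ) : ∃ g, i ≤ t + 1 → g ∈ U ^ i ∧
      (∏ m ∈ Finset.Ioc i (t + 1), y m) * g ∉ Submodule.span k {1, y i} * U ^ t := by
    by_cases hi : i ≤ t + 1
    · obtain ⟨g, hg, hg'⟩ := SetLike.not_le_iff_exists.mp (hy i hi)
      exact ⟨g, fun _ => ⟨by simpa using hg, hg'⟩⟩
    · exact ⟨0, fun h => absurd h hi⟩
  choose g hg using hex
  have hmem (s : Finset ℕ) (i r : ℕ) (hi : i ≤ t + 1) (hs : ∀ m ∈ s, m ≤ t + 1)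
      (hr : s.card + i = r) : (∏ m ∈ s, y m) * g i ∈ U ^ r := by
    rw [← hr, pow_add]
    exact Submodule.mul_mem_mul (prod_mem_pow_card U s y fun m hm => hyU m (hs m hm)) (hg i hi).1
  have hdim := finrank_add_le_of_triangular (t + 2)
    (fun i => (∏ m ∈ Finset.Ioc i (t + 1), y m) * g i)
    (fun i => Submodule.span k {1, y i} * U ^ t) (U ^ t) (U ^ (t + 1))
    (pow_le_pow_right' h1 t.le_succ)
    (fun i hi => hmem _ i _ (by omega) (fun m hm => (Finset.mem_Ioc.mp hm).2)
      (by rw [Nat.card_Ioc]; omega))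
    (fun i _ => by rw [span_one_pair_mul]; exact le_sup_left)
    (fun j hj i hij => by
      have hj' : j ∈ Finset.Ioc i (t + 1) := Finset.mem_Ioc.mpr ⟨hij, by omega⟩
      rw [← Finset.mul_prod_erase _ _ hj', mul_assoc]
      refine Submodule.mul_mem_mul (Submodule.subset_span (by simp)) (hmem _ i t (by omega)
        (fun m hm => (Finset.mem_Ioc.mp (Finset.mem_of_mem_erase hm)).2) ?_)
      rw [Finset.card_erase_of_mem hj', Nat.card_Ioc]
      omega)
    (fun i hi => (hg i (by omega)).2)
  omega

lemma pow_succ_le_span_mul_of_le {U N : Submodule k A} {s t : ℕ} (hst : s ≤ t)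
    (h : U ^ (s + 1) ≤ N * U ^ s) : U ^ (t + 1) ≤ N * U ^ t := by
  obtain ⟨r, rfl⟩ := Nat.exists_eq_add_of_le hst
  rw [add_right_comm, pow_add U (s + 1), pow_add U s r, ← mul_assoc]
  exact mul_le_mul_left h _

-- Multiplication by `y` maps `U ^ t` into `U ^ (t + 1)`, which bounds the dimension of
-- `y * U ^ (t + 1)` modulo `U ^ (t + 1)`.
lemma finrank_pow_concave_of_le_span_mul [FiniteDimensional k A] {U : Submodule k A} (h1 : 1 ≤ U)
    {y : A} (hy : y ∈ U) {t : ℕ} (hgen : U ^ (t + 2) ≤ Submodule.span k {1, y} * U ^ (t + 1)) :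
    finrank k ↥(U ^ (t + 2)) + finrank k ↥(U ^ t) ≤ 2 * finrank k ↥(U ^ (t + 1)) := by
  have hinf : U ^ t ≤ U ^ (t + 1) ⊓ (U ^ (t + 1)).comap (LinearMap.mulLeft k y) :=
    le_inf (pow_le_pow_right' h1 t.le_succ) fun x hx => by
      rw [pow_succ']
      exact Submodule.mul_mem_mul hy hx
  have hdim := finrank_sup_map_add_finrank_inf_comap (LinearMap.mulLeft k y) (U ^ (t + 1))
  rw [span_one_pair_mul] at hgen
  have := Submodule.finrank_mono hinf
  have := Submodule.finrank_mono hgen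
  omega

lemma finrank_pow_concave [Infinite k] [FiniteDimensional k A] {U : Submodule k A} (h1 : 1 ≤ U)
    {s : ℕ} (hs : finrank k ↥(U ^ (s + 1)) ≤ finrank k ↥(U ^ s) + (s + 1)) {t : ℕ} (hst : s ≤ t) :
    finrank k ↥(U ^ (t + 2)) + finrank k ↥(U ^ t) ≤ 2 * finrank k ↥(U ^ (t + 1)) := by
  obtain ⟨y, hyU, hy⟩ := exists_pow_succ_le_span_mul U h1 s hs
  exact finrank_pow_concave_of_le_span_mul h1 hyU
    (pow_succ_le_span_mul_of_le (hst.trans t.le_succ) hy)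

end Filtration

section HilbertFunction

/-- The growth property of the Hilbert function of a filtration by powers: once a step of `H` from
`s` to `s + 1` is at most `s + 1`, the later steps are non-increasing. -/
def IsMacaulay (H : ℕ → ℕ) : Prop :=
  ∀ ⦃s⦄, H (s + 1) ≤ H s + (s + 1) → ∀ ⦃t⦄, s ≤ t → H (t + 2) + H t ≤ 2 * H (t + 1)

lemma add_mul_le_of_forall_step_ge {H : ℕ → ℕ} {a b c : ℕ} (hab : a ≤ b)
    (h : ∀ i, a ≤ i → i < b → H i + c ≤ H (i + 1)) : H a + c * (b - a) ≤ H b := by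
  induction b, hab using Nat.le_induction with
  | base => simp
  | succ b hab ih =>
    have := ih fun i hai hib => h i hai (by omega)
    have := h b hab b.lt_succ_self
    rw [Nat.succ_sub hab, Nat.mul_succ]
    omega

lemma le_add_mul_of_forall_step_le {H : ℕ → ℕ} {a b c : ℕ} (hab : a ≤ b)
    (h : ∀ i, a ≤ i → H (i + 1) ≤ H i + c) : H b ≤ H a + c * (b - a) := by
  induction b, hab using Nat.le_induction with
  | base => simp
  | succ b hab ih =>
    have := h b hab
    rw [Nat.succ_sub hab, Nat.mul_succ]
    omega

lemma step_le_of_concave {H : ℕ → ℕ} {s t c : ℕ}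
    (hH : ∀ t, s ≤ t → H (t + 2) + H t ≤ 2 * H (t + 1)) (hs : H (s + 1) ≤ H s + c) (hst : s ≤ t) :
    H (t + 1) ≤ H t + c := by
  induction t, hst using Nat.le_induction with
  | base => exact hs
  | succ t hst ih =>
    have := hH t hst
    rw [show t + 1 + 1 = t + 2 from rfl]
    omega

variable {H : ℕ → ℕ}

lemma IsMacaulay.step_le (hH : IsMacaulay H) {s t c : ℕ} (hc : c ≤ s + 1)
    (hs : H (s + 1) ≤ H s + c) (hst : s ≤ t) : H (t + 1) ≤ H t + c :=
  step_le_of_concave (hH (by omega)) hs hst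

lemma succ_mul_le_of_forall_step_gt {d : ℕ} (h0 : H 0 = 1)
    (h : ∀ t < d, H t + (t + 1) < H (t + 1)) : (d + 1) * (d + 2) ≤ 2 * H d := by
  induction d with
  | zero => omega
  | succ d ih =>
    have := ih fun t ht => h t (by omega)
    have := h d d.lt_succ_self
    nlinarith

lemma IsMacaulay.step_le_succ (hH : IsMacaulay H) (h0 : H 0 = 1) {d : ℕ}
    (hd : 2 * H (d + 1) < (d + 2) * (d + 3)) : H (d + 1) ≤ H d + (d + 1) := by
  obtain ⟨t, htd, ht⟩ : ∃ t < d + 1, H (t + 1) ≤ H t + (t + 1) := by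
    by_contra! hbig
    exact hd.not_ge (succ_mul_le_of_forall_step_gt h0 hbig)
  have := hH.step_le le_rfl ht (Nat.le_of_lt_succ htd)
  omega

lemma exists_first_lt_four_mul {b : ℕ} (h2 : 8 ≤ H 2) (hb : 2 ≤ b) (hlt : H b < 4 * b) :
    ∃ a, 2 ≤ a ∧ a < b ∧ (∀ i, 2 ≤ i → i ≤ a → 4 * i ≤ H i) ∧ H (a + 1) ≤ H a + 3 := by
  classical
  have hex : ∃ i, 2 ≤ i ∧ H i < 4 * i := ⟨b, hb, hlt⟩
  obtain ⟨hge, hfirst⟩ := Nat.find_spec hex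
  have hmin : ∀ i, 2 ≤ i → i < Nat.find hex → 4 * i ≤ H i := fun i hi hlt =>
    not_lt.mp fun hi' => Nat.find_min hex hlt ⟨hi, hi'⟩
  have hle : Nat.find hex ≤ b := Nat.find_min' hex ⟨hb, hlt⟩
  have hne : Nat.find hex ≠ 2 := fun h => by rw [h] at hfirst; omega
  obtain ⟨a, ha⟩ : ∃ a, Nat.find hex = a + 1 := ⟨Nat.find hex - 1, by omega⟩
  rw [ha] at hge hfirst hmin hle hne
  have := hmin a (by omega) a.lt_succ_self
  exact ⟨a, by omega, by omega, fun i hi hia => hmin i hi (by omega), by omega⟩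

-- If `a` is the last argument before `H` drops below `4 * i`, then symmetry bounds `H (d - a)` by
-- `3 * (d - a) + 1`, which is too small.
lemma IsMacaulay.apply_two_le_seven (hH : IsMacaulay H) {d z : ℕ} (h0 : H 0 = 1) (h1 : H 1 = 4)
    (hsym : ∀ s ≤ d, H s + H (d - s) ≤ z) (hz : z ≤ H d + 1) (hzd : z + 2 ≤ 4 * d) :
    H 2 ≤ 7 := by
  by_contra! h2
  have hd : 4 ≤ d := by
    by_contra! hd
    have hlast := hsym d le_rfl
    interval_cases d
    · omega
    · omega
    · omega
    · have := hsym 2 (by omega)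
      simp only [Nat.reduceSub] at this
      omega
  have hsym1 := hsym 1 (by omega)
  have hsym2 := hsym 2 (by omega)
  obtain ⟨a, ha2, had, hbig, hsmall⟩ := exists_first_lt_four_mul (b := d - 2) h2 (by omega)
    (by omega)
  have hupper : H d ≤ H a + 3 * (d - a) := le_add_mul_of_forall_step_le (by omega) fun i hi =>
    hH.step_le (by omega) hsmall hi
  have hsyma := hsym (d - a) (by omega)
  rw [Nat.sub_sub_self (by omega)] at hsyma
  rcases le_or_gt (d - a) a with hle | hlt
  · have := hbig (d - a) (by omega) hle
    omega
  · have hstep (i : ℕ) (hai : a ≤ i) (hid : i < d - a) : H i + 3 ≤ H (i + 1) := by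
      by_contra! hlt3
      have := hH.step_le (c := 2) (by omega) (by omega) (show i ≤ d - 1 by omega)
      rw [Nat.sub_add_cancel (by omega)] at this
      omega
    have := add_mul_le_of_forall_step_ge hlt.le hstep
    have := hbig a ha2 le_rfl
    omega

end HilbertFunction

section Frobenius

variable {k A : Type*} [Field k] [CommRing A] [Algebra k A]

/-- The symmetric bilinear form `(a, b) ↦ φ (a * b)` attached to a functional on an algebra. -/
def productForm (φ : Dual k A) : LinearMap.BilinForm k A :=
  (LinearMap.mul k A).compr₂ φ

lemma productForm_apply (φ : Dual k A) (a b : A) : productForm φ a b = φ (a * b) := rfl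

lemma productForm_nondegenerate {φ : Dual k A} (hφ : ∀ a, (∀ b, φ (a * b) = 0) → a = 0) :
    (productForm φ).Nondegenerate :=
  ⟨hφ, fun b hb => hφ b fun a => by rw [mul_comm]; exact hb a⟩

lemma finrank_one_submodule [Nontrivial A] : finrank k ↥(1 : Submodule k A) = 1 := by
  rw [Submodule.one_eq_span, finrank_span_singleton one_ne_zero]

variable [FiniteDimensional k A] {φ : Dual k A} {U : Submodule k A} {d : ℕ}

lemma finrank_pow_add_finrank_pow_le (hφ : (productForm φ).Nondegenerate)
    (hU : ∀ a ∈ U ^ d, φ a = 0) {s : ℕ} (hs : s ≤ d) :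
    finrank k ↥(U ^ s) + finrank k ↥(U ^ (d - s)) ≤ finrank k A := by
  have hle : U ^ (d - s) ≤ (productForm φ).orthogonal (U ^ s) := fun b hb a ha => by
    refine hU (a * b) ?_
    simpa only [← pow_add, Nat.add_sub_cancel' hs] using Submodule.mul_mem_mul ha hb
  have := Submodule.finrank_mono hle
  have := LinearMap.BilinForm.finrank_orthogonal hφ (U ^ s)
  have := (U ^ s).finrank_le
  omega

-- If `u, y * u ∈ U` then `u` is orthogonal to `U ^ (d + 1)`, hence a constant.
lemma finrank_sup_map_mulLeft [Nontrivial A] (hU : ∀ a ∈ U ^ (d + 1), φ a = 0)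
    (horth : (productForm φ).orthogonal (U ^ (d + 1)) ≤ 1) {y : A}
    (hgen : U ^ (d + 1) ≤ Submodule.span k {1, y} * U ^ d) :
    2 * finrank k U ≤ finrank k ↥(U ⊔ U.map (LinearMap.mulLeft k y)) + 1 := by
  have hinf : U ⊓ U.comap (LinearMap.mulLeft k y) ≤ 1 := fun u hu => horth fun a ha => by
    rw [span_one_pair_mul] at hgen
    obtain ⟨b, hb, _, ⟨c, hc, rfl⟩, rfl⟩ := Submodule.mem_sup.mp (hgen ha)
    have hbu : φ (u * b) = 0 := hU _ (by rw [pow_succ']; exact Submodule.mul_mem_mul hu.1 hb)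
    have hcu : φ (y * u * c) = 0 := hU _ (by rw [pow_succ']; exact Submodule.mul_mem_mul hu.2 hc)
    have hsplit : (b + y * c) * u = u * b + y * u * c := by ring
    rw [productForm_apply, LinearMap.mulLeft_apply, hsplit, map_add, hbu, hcu, add_zero]
  have := finrank_sup_map_add_finrank_inf_comap (LinearMap.mulLeft k y) U
  have := Submodule.finrank_mono hinf
  rw [finrank_one_submodule] at this
  omega

-- The same `y` that generates `U ^ (d + 1)` over `U ^ d` generates `U ^ 2` over `U`, because the
-- dimension of `U ^ 2` is as small as possible.
lemma sq_le_span_mul [Nontrivial A] (h1 : 1 ≤ U) (hU : ∀ a ∈ U ^ (d + 1), φ a = 0)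
    (horth : (productForm φ).orthogonal (U ^ (d + 1)) ≤ 1) {y : A} (hy : y ∈ U)
    (hgen : U ^ (d + 1) ≤ Submodule.span k {1, y} * U ^ d)
    (h2 : finrank k ↥(U ^ 2) + 1 ≤ 2 * finrank k U) :
    U ^ 2 ≤ Submodule.span k {1, y} * U := by
  have hle : Submodule.span k {1, y} * U ≤ U ^ 2 := by
    rw [sq]
    refine mul_le_mul_left (Submodule.span_le.mpr ?_) U
    simp [Set.insert_subset_iff, hy, Submodule.one_le.mp h1]
  have := finrank_sup_map_mulLeft hU horth hgen
  refine (Submodule.eq_of_le_of_finrank_le hle ?_).ge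
  rw [span_one_pair_mul]
  omega

theorem finrank_pow_succ_le_add_three [Infinite k] (h1 : 1 ≤ U) (h4 : finrank k U = 4)
    (hφ : (productForm φ).Nondegenerate) (hU : ∀ a ∈ U ^ d, φ a = 0)
    (horth : (productForm φ).orthogonal (U ^ d) ≤ 1) (hd : finrank k A + 2 ≤ 4 * d) (t : ℕ) :
    finrank k ↥(U ^ (t + 1)) ≤ finrank k ↥(U ^ t) + 3 := by
  obtain ⟨e, rfl⟩ : ∃ e, d = e + 1 := ⟨d - 1, by omega⟩
  have : Nontrivial A := ⟨by
    by_contra! hsub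
    have : Subsingleton A := ⟨hsub⟩
    rw [finrank_zero_of_subsingleton] at h4
    omega⟩
  obtain ⟨H, hH⟩ : ∃ H : ℕ → ℕ, ∀ s, finrank k ↥(U ^ s) = H s := ⟨_, fun _ => rfl⟩
  have hmac : IsMacaulay H := fun s hs t hst => by
    simp only [← hH] at hs ⊢
    exact finrank_pow_concave h1 hs hst
  have hH0 : H 0 = 1 := by rw [← hH, pow_zero, finrank_one_submodule]
  have hH1 : H 1 = 4 := by rw [← hH, pow_one, h4]
  have hsym (s : ℕ) (hs : s ≤ e + 1) : H s + H (e + 1 - s) ≤ finrank k A := by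
    simpa only [hH] using finrank_pow_add_finrank_pow_le hφ hU hs
  have hA : finrank k A ≤ H (e + 1) + 1 := by
    have := Submodule.finrank_mono horth
    rw [LinearMap.BilinForm.finrank_orthogonal hφ, finrank_one_submodule, hH] at this
    omega
  have h2 : H 2 ≤ 7 := hmac.apply_two_le_seven hH0 hH1 hsym hA hd
  have hlast : H (e + 1) ≤ H e + (e + 1) := hmac.step_le_succ hH0 (by
    have := hsym 0 (by omega)
    rw [Nat.sub_zero] at this
    nlinarith [sq_nonneg ((e : ℤ) - 1)])
  obtain ⟨y, hyU, hgen⟩ := exists_pow_succ_le_span_mul U h1 e (by simpa only [hH] using hlast)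
  have hsq : U ^ (1 + 1) ≤ Submodule.span k {1, y} * U ^ 1 := by
    rw [pow_one]
    refine sq_le_span_mul h1 hU horth hyU hgen ?_
    rw [h4, hH]
    omega
  have hconcave (s : ℕ) : H (s + 2) + H s ≤ 2 * H (s + 1) := by
    simpa only [hH] using finrank_pow_concave_of_le_span_mul h1 hyU
      (pow_succ_le_span_mul_of_le (by omega) hsq)
  rw [hH, hH]
  exact step_le_of_concave (s := 0) (fun s _ => hconcave s) (by rw [zero_add]; omega) t.zero_le

end Frobenius

section Jets

variable {σ k : Type*} [Field k]

/-- The image under `F` of the forms of degree `t`. -/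
def formImage {A : Type*} [CommRing A] [Algebra k A] (F : MvPolynomial σ k →ₐ[k] A) (t : ℕ) :
    Submodule k A :=
  (homogeneousSubmodule σ k t).map F.toLinearMap

lemma formImage_one_pow {A : Type*} [CommRing A] [Algebra k A] (F : MvPolynomial σ k →ₐ[k] A)
    (t : ℕ) : formImage F 1 ^ t = formImage F t := by
  rw [formImage, ← Submodule.map_pow, homogeneousSubmodule_one_pow, formImage]

lemma finrank_formImage_rangeRestrict {A : Type*} [CommRing A] [Algebra k A]
    (F : MvPolynomial σ k →ₐ[k] A) (t : ℕ) :
    finrank k ↥(formImage F.rangeRestrict t) = finrank k ↥(formImage F t) := by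
  have hmap : formImage F t = (formImage F.rangeRestrict t).map F.range.val.toLinearMap := by
    rw [formImage, formImage, ← Submodule.map_comp]
    rfl
  rw [hmap]
  exact (Submodule.equivMapOfInjective F.range.val.toLinearMap
    Subtype.val_injective _).finrank_eq

variable {ι : Type*}

/-- The first-order jets of a polynomial at the points `P p` in the directions `w p`. -/
def jet (P w : ι → σ → k) : MvPolynomial σ k →ₐ[k] (ι → DualNumber k) :=
  AlgHom.pi fun p =>
    aeval fun i => (TrivSqZeroExt.inl (P p i) + TrivSqZeroExt.inr (w p i) : DualNumber k)

lemma fst_jet (P w : ι → σ → k) (f : MvPolynomial σ k) (p : ι) :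
    (jet P w f p).fst = eval (P p) f := by
  change TrivSqZeroExt.fstHom k k k (aeval _ f) = _
  rw [comp_aeval_apply]
  simp

-- The witness is a product of squares of affine forms.
lemma exists_jet_eq_zero_off [Finite ι] {P : ι → σ → k} (hP : Function.Injective P) (p : ι) :
    ∃ e : MvPolynomial σ k, eval (P p) e ≠ 0 ∧ ∀ w : ι → σ → k, ∀ q, q ≠ p → jet P w e q = 0 := by
  classical
  cases nonempty_fintype ι
  have hsep (q : ι) (hq : q ≠ p) :
      ∃ l : MvPolynomial σ k, eval (P q) l = 0 ∧ eval (P p) l ≠ 0 := by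
    obtain ⟨i, hi⟩ := Function.ne_iff.mp (hP.ne hq.symm)
    exact ⟨X i - C (P q i), by simp, by simpa using sub_ne_zero.mpr hi⟩
  choose! l hlq hlp using hsep
  refine ⟨∏ q ∈ Finset.univ.erase p, l q ^ 2, ?_, fun w q hq => ?_⟩
  · rw [map_prod, Finset.prod_ne_zero_iff]
    intro q hq
    rw [map_pow]
    exact pow_ne_zero 2 (hlp q (Finset.ne_of_mem_erase hq))
  · rw [map_prod, Finset.prod_apply]
    refine Finset.prod_eq_zero (Finset.mem_erase.mpr ⟨hq, Finset.mem_univ q⟩) ?_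
    have hfst : (jet P w (l q) q).fst = 0 := (fst_jet P w (l q) q).trans (hlq q hq)
    rw [sq, map_mul, Pi.mul_apply]
    exact TrivSqZeroExt.ext (by simp [hfst]) (by simp [TrivSqZeroExt.snd_mul, hfst])

variable [Fintype σ]

/-- The linear form with coefficient vector `a`. -/
def linForm : (σ → k) →ₗ[k] MvPolynomial σ k :=
  Fintype.linearCombination k X

lemma range_linForm : LinearMap.range (linForm : (σ → k) →ₗ[k] MvPolynomial σ k)
    = homogeneousSubmodule σ k 1 := by
  rw [linForm, Fintype.range_linearCombination, homogeneousSubmodule_one_eq_span_X]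

lemma linForm_mem (a : σ → k) : linForm a ∈ homogeneousSubmodule σ k 1 :=
  range_linForm.le (LinearMap.mem_range_self _ a)

lemma eval_linForm (a v : σ → k) : eval v (linForm a) = a ⬝ᵥ v := by
  simp [linForm, Fintype.linearCombination_apply, smul_eval, dotProduct]

lemma finrank_formImage_one {A : Type*} [CommRing A] [Algebra k A] (F : MvPolynomial σ k →ₐ[k] A)
    (hF : ∀ a, F (linForm a) = 0 → a = 0) : finrank k ↥(formImage F 1) = Fintype.card σ := by
  rw [formImage, ← range_linForm, ← LinearMap.range_comp, LinearMap.finrank_range_of_inj,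
    finrank_fintype_fun_eq_card]
  exact (injective_iff_map_eq_zero _).mpr hF

lemma finrank_formImage_one_le {A : Type*} [CommRing A] [Algebra k A]
    (F : MvPolynomial σ k →ₐ[k] A) : finrank k ↥(formImage F 1) ≤ Fintype.card σ := by
  rw [formImage, ← range_linForm, ← LinearMap.range_comp, ← finrank_fintype_fun_eq_card k]
  exact LinearMap.finrank_range_le _

/-- The derivative at the point `v` in the direction `w`, linear in `w` and in the polynomial. -/
def dirDeriv (v : σ → k) : (σ → k) →ₗ[k] Dual k (MvPolynomial σ k) :=
  Fintype.linearCombination k fun i => (aeval v).toLinearMap ∘ₗ (pderiv i).toLinearMap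

lemma dirDeriv_apply (v w : σ → k) (f : MvPolynomial σ k) :
    dirDeriv v w f = w ⬝ᵥ fun i => eval v (pderiv i f) := by
  simp [dirDeriv, Fintype.linearCombination_apply, dotProduct]

lemma dirDeriv_C (v w : σ → k) (a : k) : dirDeriv v w (C a) = 0 := by
  simp [dirDeriv_apply, dotProduct]

lemma dirDeriv_X (v w : σ → k) (i : σ) : dirDeriv v w (X i) = w i := by
  classical
  simp [dirDeriv_apply, dotProduct, pderiv_X, Pi.single_apply, apply_ite (eval v)]

lemma dirDeriv_mul (v w : σ → k) (f g : MvPolynomial σ k) :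
    dirDeriv v w (f * g) = eval v f * dirDeriv v w g + dirDeriv v w f * eval v g := by
  simp only [dirDeriv_apply, dotProduct, Derivation.leibniz, smul_eq_mul, map_add, map_mul,
    Finset.mul_sum, Finset.sum_mul, ← Finset.sum_add_distrib]
  exact Finset.sum_congr rfl fun i _ => by ring

lemma dirDeriv_linForm (v w a : σ → k) : dirDeriv v w (linForm a) = a ⬝ᵥ w := by
  simp [linForm, Fintype.linearCombination_apply, dirDeriv_X, dotProduct]

lemma eval_eq_zero_and_dirDeriv_eq_zero {v w : σ → k} {c : k} (hwc : w = 0 → c ≠ 0)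
    {g : MvPolynomial σ k} (hg : ∀ f, dirDeriv v w (g * f) + c * eval v (g * f) = 0) :
    eval v g = 0 ∧ dirDeriv v w g = 0 := by
  have hone := hg 1
  rw [mul_one] at hone
  have heval : eval v g = 0 := by
    by_cases hw : w = 0
    · rw [hw, map_zero, LinearMap.zero_apply, zero_add] at hone
      exact (mul_eq_zero.mp hone).resolve_left (hwc hw)
    · obtain ⟨i, hi⟩ := Function.ne_iff.mp hw
      have hX := hg (X i - C (v i))
      rw [dirDeriv_mul, map_sub, dirDeriv_X, dirDeriv_C] at hX
      simp only [map_mul, map_sub, eval_X, eval_C, sub_self, mul_zero, add_zero, sub_zero] at hX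
      exact (mul_eq_zero.mp hX).resolve_right hi
  refine ⟨heval, ?_⟩
  rwa [heval, mul_zero, add_zero] at hone

lemma snd_jet (P w : ι → σ → k) (f : MvPolynomial σ k) (p : ι) :
    (jet P w f p).snd = dirDeriv (P p) (w p) f := by
  induction f using MvPolynomial.induction_on with
  | C a => simp [jet, dirDeriv_C, TrivSqZeroExt.algebraMap_eq_inl]
  | add f g hf hg => rw [map_add, map_add, Pi.add_apply, TrivSqZeroExt.snd_add, hf, hg]
  | mul_X f i hf =>
    have hX : (jet P w (X i) p).snd = w p i := by simp [jet]
    rw [map_mul, dirDeriv_mul, Pi.mul_apply, TrivSqZeroExt.snd_mul, hf, hX, fst_jet, fst_jet,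
      dirDeriv_X, smul_eq_mul, MulOpposite.smul_eq_mul_unop, MulOpposite.unop_op]

lemma jet_apply_eq_zero_iff {P w : ι → σ → k} {f : MvPolynomial σ k} {p : ι} :
    jet P w f p = 0 ↔ eval (P p) f = 0 ∧ dirDeriv (P p) (w p) f = 0 := by
  rw [TrivSqZeroExt.ext_iff, fst_jet, snd_jet, TrivSqZeroExt.fst_zero, TrivSqZeroExt.snd_zero]

lemma jet_linForm_eq_one {P w : ι → σ → k} {L : σ → k} (hP : ∀ p, L ⬝ᵥ P p = 1)
    (hw : ∀ p, L ⬝ᵥ w p = 0) : jet P w (linForm L) = 1 := by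
  funext p
  refine TrivSqZeroExt.ext ?_ ?_
  · rw [fst_jet, eval_linForm, hP]; rfl
  · rw [snd_jet, dirDeriv_linForm, hw]; rfl

lemma one_le_formImage_jet {P w : ι → σ → k} {L : σ → k} (hP : ∀ p, L ⬝ᵥ P p = 1)
    (hw : ∀ p, L ⬝ᵥ w p = 0) : 1 ≤ formImage (jet P w) 1 :=
  Submodule.one_le.mpr ⟨linForm L, linForm_mem L, jet_linForm_eq_one hP hw⟩

lemma finrank_formImage_jet_one {P : ι → σ → k} (hspan : ∀ a, (∀ p, a ⬝ᵥ P p = 0) → a = 0)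
    (w : ι → σ → k) : finrank k ↥(formImage (jet P w) 1) = Fintype.card σ := by
  refine finrank_formImage_one _ fun a ha => hspan a fun p => ?_
  rw [← eval_linForm, ← fst_jet P w, ha]
  rfl

instance finiteDimensional_dualNumber : FiniteDimensional k (DualNumber k) :=
  inferInstanceAs (FiniteDimensional k (k × k))

lemma finrank_dualNumber : finrank k (DualNumber k) = 2 :=
  (finrank_prod (R := k) (M := k) (M' := k)).trans (by rw [finrank_self])

lemma finrank_pi_dualNumber [Fintype ι] : finrank k (ι → DualNumber k) = 2 * Fintype.card ι := by
  rw [finrank_pi_fintype, Finset.sum_const, finrank_dualNumber, smul_eq_mul, Finset.card_univ,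
    mul_comm]

end Jets

section Relations

variable {σ k ι : Type*} [Field k] [Fintype ι]

/-- The functional `b ↦ ∑ p, (b p).snd + c p * (b p).fst` on `ι`-indexed dual numbers. Composed with
`jet P w`, it is a general combination of derivatives in the directions `w p` and of evaluations. -/
def jetFunctional (c : ι → k) : Dual k (ι → DualNumber k) :=
  ∑ p, (TrivSqZeroExt.sndHom k k + c p • (TrivSqZeroExt.fstHom k k k).toLinearMap) ∘ₗ
    LinearMap.proj p

lemma jetFunctional_apply (c : ι → k) (b : ι → DualNumber k) :
    jetFunctional c b = ∑ p, ((b p).snd + c p * (b p).fst) := by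
  simp [jetFunctional]

lemma jetFunctional_jet [Fintype σ] (P w : ι → σ → k) (c : ι → k) (f : MvPolynomial σ k) :
    jetFunctional c (jet P w f) = ∑ p, (dirDeriv (P p) (w p) f + c p * eval (P p) f) := by
  simp only [jetFunctional_apply, fst_jet, snd_jet]

lemma jetFunctional_jet_mul [Fintype σ] (P w : ι → σ → k) (c : ι → k) (g f : MvPolynomial σ k) :
    jetFunctional c (jet P w (g * f)) =
      jetFunctional (fun q => c q * eval (P q) g + dirDeriv (P q) (w q) g)
        (jet P (fun q => eval (P q) g • w q) f) := by
  rw [jetFunctional_jet, jetFunctional_jet]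
  refine Finset.sum_congr rfl fun q _ => ?_
  rw [map_smul, LinearMap.smul_apply, smul_eq_mul, dirDeriv_mul, map_mul]
  ring

lemma jet_eq_zero_of_jetFunctional_mul_eq_zero [Finite σ] {P w : ι → σ → k} {c : ι → k}
    (hP : Function.Injective P) (hwc : ∀ p, w p = 0 → c p ≠ 0) {g : MvPolynomial σ k}
    (hg : ∀ f, jetFunctional c (jet P w (g * f)) = 0) : jet P w g = 0 := by
  cases nonempty_fintype σ
  funext p
  obtain ⟨e, hep, heq⟩ := exists_jet_eq_zero_off hP p
  have hlocal (f : MvPolynomial σ k) :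
      dirDeriv (P p) (w p) (g * e * f) + c p * eval (P p) (g * e * f) = 0 := by
    have hsum := hg (e * f)
    rwa [← mul_assoc, jetFunctional_jet, Fintype.sum_eq_single p] at hsum
    intro q hq
    have hzero : jet P w (g * e * f) q = 0 := by
      rw [map_mul, map_mul, Pi.mul_apply, Pi.mul_apply, heq w q hq, mul_zero, zero_mul]
    rw [jet_apply_eq_zero_iff] at hzero
    rw [hzero.1, hzero.2, mul_zero, add_zero]
  have hge : jet P w g p * jet P w e p = 0 := by
    rw [← Pi.mul_apply, ← map_mul]
    exact jet_apply_eq_zero_iff.mpr (eval_eq_zero_and_dirDeriv_eq_zero (hwc p) hlocal)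
  have hunit : IsUnit (jet P w e p) :=
    TrivSqZeroExt.isUnit_iff_isUnit_fst.mpr (by rw [fst_jet]; exact hep.isUnit)
  exact hunit.mul_left_eq_zero.mp hge

variable [Fintype σ]

/-- A linear relation between the derivatives in the directions `w p` and the values at the points
`P p` of the forms of degree `d`. The directions are normalised to be tangent to the affine chart
`L ⬝ᵥ v = 1`. -/
structure IsRelation (L : σ → k) (P : ι → σ → k) (d : ℕ) (w : ι → σ → k) (c : ι → k) : Prop where
  tangent : ∀ p, L ⬝ᵥ w p = 0
  vanishes : ∀ f ∈ homogeneousSubmodule σ k d, jetFunctional c (jet P w f) = 0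

/-- Every non-trivial relation in degree `d` involves all the points: this is minimality of the
point set, read on relations. -/
def IsRigid (L : σ → k) (P : ι → σ → k) (d : ℕ) : Prop :=
  ∀ w c, IsRelation L P d w c → ∀ p, w p = 0 → c p = 0 → w = 0 ∧ c = 0

/-- A relation is determined by its leading term at `p`: the derivative term and, if `w` has no
derivative term at `p`, also the value term. -/
def IsBasePoint (L : σ → k) (P : ι → σ → k) (d : ℕ) (w : ι → σ → k) (p : ι) : Prop :=
  ∀ w' c', IsRelation L P d w' c' → w' p = 0 → (w p = 0 → c' p = 0) → w' = 0 ∧ c' = 0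

variable {L : σ → k} {P w : ι → σ → k} {c : ι → k} {d : ℕ}

-- Prefer a relation without a derivative term at some point `p`, if there is one.
lemma IsRigid.exists_isBasePoint [Nonempty ι] (hrigid : IsRigid L P d)
    (hex : ∃ w c, IsRelation L P d w c ∧ ¬(w = 0 ∧ c = 0)) :
    ∃ w c p, IsRelation L P d w c ∧ (∀ q, w q = 0 → c q ≠ 0) ∧ IsBasePoint L P d w p := by
  have hfull {w : ι → σ → k} {c : ι → k} (hrel : IsRelation L P d w c) (h0 : ¬(w = 0 ∧ c = 0))
      (q : ι) (hw : w q = 0) : c q ≠ 0 :=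
    fun hc => h0 (hrigid w c hrel q hw hc)
  by_cases hzero : ∃ w c p, IsRelation L P d w c ∧ ¬(w = 0 ∧ c = 0) ∧ w p = 0
  · obtain ⟨w, c, p, hrel, h0, hp⟩ := hzero
    exact ⟨w, c, p, hrel, hfull hrel h0, fun w' c' hrel' hw' hc' =>
      hrigid w' c' hrel' p hw' (hc' hp)⟩
  · push Not at hzero
    obtain ⟨w, c, hrel, h0⟩ := hex
    refine ⟨w, c, Classical.arbitrary ι, hrel, hfull hrel h0, fun w' c' hrel' hw' _ => ?_⟩
    by_contra h0'
    exact hzero w' c' _ hrel' (not_and.mp h0') hw'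

-- `γ - γ (P p)` twists the relation `(w, c)` into one that is trivial at `p`.
lemma IsRelation.jet_eq_algebraMap (hrel : IsRelation L P d w c) (hP : Function.Injective P)
    (hwc : ∀ q, w q = 0 → c q ≠ 0) {p : ι} (hp : IsBasePoint L P d w p)
    {γ : MvPolynomial σ k}
    (hγ : ∀ f ∈ homogeneousSubmodule σ k d, jetFunctional c (jet P w (γ * f)) = 0) :
    jet P w γ = algebraMap k _ (eval (P p) γ) := by
  set g := γ - C (eval (P p) γ) with hg
  have hgp : eval (P p) g = 0 := by simp [hg]
  have htwist : IsRelation L P d (fun q => eval (P q) g • w q)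
      (fun q => c q * eval (P q) g + dirDeriv (P q) (w q) g) := by
    refine ⟨fun q => by rw [dotProduct_smul, hrel.tangent, smul_zero], fun f hf => ?_⟩
    rw [← jetFunctional_jet_mul, hg, sub_mul, map_sub, map_sub, C_mul', map_smul, map_smul,
      hγ f hf, hrel.vanishes f hf, smul_zero, sub_zero]
  obtain ⟨hw0, hc0⟩ := hp _ _ htwist (by simp [hgp]) fun h => by simp [hgp, h]
  have hzero : jet P w g = 0 := by
    refine jet_eq_zero_of_jetFunctional_mul_eq_zero hP hwc fun f => ?_
    rw [jetFunctional_jet_mul, hw0, hc0, jetFunctional_jet]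
    simp
  rwa [hg, map_sub, sub_eq_zero, ← algebraMap_eq, AlgHom.commutes] at hzero

lemma IsRelation.finrank_formImage_jet_succ_le [Infinite k] (hrel : IsRelation L P d w c)
    (hσ : Fintype.card σ = 4) (hLP : ∀ p, L ⬝ᵥ P p = 1) (hP : Function.Injective P)
    (hspan : ∀ a, (∀ p, a ⬝ᵥ P p = 0) → a = 0) (hwc : ∀ q, w q = 0 → c q ≠ 0) {p : ι}
    (hp : IsBasePoint L P d w p) (hcard : 2 * Fintype.card ι + 2 ≤ 4 * d) (t : ℕ) :
    finrank k ↥(formImage (jet P w) (t + 1)) ≤ finrank k ↥(formImage (jet P w) t) + 3 := by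
  let F := (jet P w).rangeRestrict
  have hsurj : Function.Surjective F := (jet P w).rangeRestrict_surjective
  let φ : Dual k (jet P w).range := jetFunctional c ∘ₗ (jet P w).range.val.toLinearMap
  have hone : 1 ≤ formImage F 1 :=
    Submodule.one_le.mpr ⟨linForm L, linForm_mem L,
      Subtype.ext (jet_linForm_eq_one hLP hrel.tangent)⟩
  have hfour : finrank k ↥(formImage F 1) = 4 := by
    rw [finrank_formImage_rangeRestrict, finrank_formImage_jet_one hspan, hσ]
  have hnondeg : (productForm φ).Nondegenerate := by
    refine productForm_nondegenerate fun a ha => ?_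
    obtain ⟨g, rfl⟩ := hsurj a
    refine Subtype.ext (jet_eq_zero_of_jetFunctional_mul_eq_zero hP hwc fun f => ?_)
    rw [map_mul]
    exact ha (F f)
  have hvanish : ∀ a ∈ formImage F 1 ^ d, φ a = 0 := by
    rw [formImage_one_pow]
    rintro _ ⟨f, hf, rfl⟩
    exact hrel.vanishes f hf
  have horth : (productForm φ).orthogonal (formImage F 1 ^ d) ≤ 1 := by
    intro a ha
    obtain ⟨γ, rfl⟩ := hsurj a
    refine Submodule.mem_one.mpr ⟨eval (P p) γ, Subtype.ext ?_⟩
    refine (hrel.jet_eq_algebraMap hP hwc hp fun f hf => ?_).symm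
    rw [mul_comm, map_mul]
    exact ha (F f) (formImage_one_pow F d ▸ Submodule.mem_map_of_mem hf)
  have hdim : finrank k (jet P w).range + 2 ≤ 4 * d := by
    have hle : finrank k (jet P w).range ≤ finrank k (ι → DualNumber k) :=
      Submodule.finrank_le (Subalgebra.toSubmodule (jet P w).range)
    rw [finrank_pi_dualNumber] at hle
    omega
  have hstep := finrank_pow_succ_le_add_three hone hfour hnondeg hvanish horth hdim t
  rwa [formImage_one_pow, formImage_one_pow, finrank_formImage_rangeRestrict,
    finrank_formImage_rangeRestrict] at hstep

end Relations

section DeterminantTrick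

variable {k A n : Type*} [Field k] [CommRing A] [Algebra k A] [Fintype n]

lemma exists_eq_sum_mul_of_mem_span_mul {x : n → A} {N : Submodule k A} {z : A}
    (hz : z ∈ Submodule.span k (Set.range x) * N) :
    ∃ m : n → A, (∀ j, m j ∈ N) ∧ z = ∑ j, m j * x j := by
  refine Submodule.mul_induction_on hz (fun a ha b hb => ?_) ?_
  · obtain ⟨r, rfl⟩ := (Submodule.mem_span_range_iff_exists_fun k).mp ha
    refine ⟨fun j => r j • b, fun j => N.smul_mem _ hb, ?_⟩
    simp only [Finset.sum_mul, smul_mul_assoc]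
    exact Finset.sum_congr rfl fun j _ => by rw [mul_comm]
  · rintro _ _ ⟨m, hm, rfl⟩ ⟨m', hm', rfl⟩
    refine ⟨m + m', fun j => N.add_mem (hm j) (hm' j), ?_⟩
    simp only [Pi.add_apply, add_mul, Finset.sum_add_distrib]

variable [DecidableEq n]

lemma det_mem_pow_card {N : Submodule k A} {M : Matrix n n A} (hM : ∀ i j, M i j ∈ N) :
    M.det ∈ N ^ Fintype.card n := by
  rw [Matrix.det_apply]
  refine Submodule.sum_mem _ fun σ _ => ?_
  rw [Units.smul_def]
  exact zsmul_mem (prod_mem_pow_card N Finset.univ _ fun i _ => hM _ _) _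

lemma det_mul_eq_zero_of_mulVec_eq_zero {M : Matrix n n A} {x : n → A} (hMx : M.mulVec x = 0)
    (i : n) : M.det * x i = 0 := by
  have hdet : (M.det • (1 : Matrix n n A)).mulVec x = 0 := by
    rw [← Matrix.adjugate_mul, ← Matrix.mulVec_mulVec, hMx, Matrix.mulVec_zero]
  rw [Matrix.smul_mulVec, Matrix.one_mulVec] at hdet
  exact congrFun hdet i

variable {B : Type*} [CommRing B] [Algebra k B]

-- The determinant trick of Nakayama's lemma, keeping track of degrees.
lemma exists_mem_pow_mul_eq_zero {U I : Submodule k A} [FiniteDimensional k I] (h1 : 1 ≤ U)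
    (hIU : I ≤ U) {ev : A →ₐ[k] B} (hev : I ≤ LinearMap.ker ev.toLinearMap) {m : ℕ}
    (hI : I ≤ I * (I * U ^ m)) :
    ∃ g ∈ U ^ ((m + 1) * finrank k I), ev g = 1 ∧ ∀ x ∈ I, g * x = 0 := by
  let x : Fin (finrank k I) → A := fun i => finBasis k I i
  have hspan : Submodule.span k (Set.range x) = I := by
    rw [show x = I.subtype ∘ finBasis k I from rfl, Set.range_comp, ← Submodule.map_span,
      Basis.span_eq, Submodule.map_top, Submodule.range_subtype]
  have hcoeff (i) : ∃ m' : Fin (finrank k I) → A, (∀ j, m' j ∈ I * U ^ m) ∧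
      x i = ∑ j, m' j * x j :=
    exists_eq_sum_mul_of_mem_span_mul (hspan.symm ▸ hI (finBasis k I i).2)
  choose M hM hMx using hcoeff
  have hker : I * U ^ m ≤ LinearMap.ker ev.toLinearMap :=
    Submodule.mul_le.mpr fun a ha b _ => by
      rw [LinearMap.mem_ker, AlgHom.toLinearMap_apply, map_mul]
      rw [show ev a = 0 from hev ha, zero_mul]
  refine ⟨(1 - Matrix.of M).det, ?_, ?_, ?_⟩
  · have hentry (i j) : (1 - Matrix.of M) i j ∈ U ^ (m + 1) := by
      refine Submodule.sub_mem _ ?_ (pow_succ' U m ▸ mul_le_mul' hIU le_rfl (hM i j))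
      rw [Matrix.one_apply]
      split_ifs
      · exact one_le_pow_of_one_le' h1 _ (Submodule.one_le.mp le_rfl)
      · exact Submodule.zero_mem _
    simpa only [pow_mul, Fintype.card_fin] using det_mem_pow_card hentry
  · have hmap : ev.mapMatrix (Matrix.of M) = 0 := Matrix.ext fun i j => hker (hM i j)
    rw [AlgHom.map_det, map_sub, map_one, hmap, sub_zero, Matrix.det_one]
  · have hfix : (1 - Matrix.of M).mulVec x = 0 := by
      rw [Matrix.sub_mulVec, Matrix.one_mulVec, sub_eq_zero]
      exact funext hMx
    intro y hy
    obtain ⟨r, rfl⟩ := (Submodule.mem_span_range_iff_exists_fun k).mp (hspan.symm ▸ hy)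
    simp only [Finset.mul_sum, mul_smul_comm, det_mul_eq_zero_of_mulVec_eq_zero hfix, smul_zero,
      Finset.sum_const_zero]

end DeterminantTrick

section Taylor

variable {σ k A : Type*} [Fintype σ] [Field k] [CommRing A] [Algebra k A]

/-- The linear term `f ↦ ∑ i, ∂ᵢf(Q) • F (X i - Q i)` of the Taylor expansion of `F f` at `Q`. -/
def linearTerm (F : MvPolynomial σ k →ₐ[k] A) (Q : σ → k) : MvPolynomial σ k →ₗ[k] A :=
  ∑ i, LinearMap.toSpanSingleton k A (F (X i - C (Q i))) ∘ₗ (aeval Q).toLinearMap ∘ₗ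
    (pderiv i).toLinearMap

variable {F : MvPolynomial σ k →ₐ[k] A} {Q : σ → k}

lemma linearTerm_apply (f : MvPolynomial σ k) :
    linearTerm F Q f = ∑ i, eval Q (pderiv i f) • F (X i - C (Q i)) := by
  simp [linearTerm]

lemma linearTerm_mul (g h : MvPolynomial σ k) :
    linearTerm F Q (g * h) = eval Q g • linearTerm F Q h + eval Q h • linearTerm F Q g := by
  simp only [linearTerm_apply, Derivation.leibniz, smul_eq_mul, map_add, map_mul, Finset.smul_sum,
    add_smul, mul_smul, Finset.sum_add_distrib]

lemma linearTerm_X (i : σ) : linearTerm F Q (X i) = F (X i - C (Q i)) := by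
  classical
  simp [linearTerm_apply, pderiv_X, Pi.single_apply, apply_ite (eval Q)]

lemma linearTerm_linForm (a : σ → k) :
    linearTerm F Q (linForm a) = F (linForm a) - algebraMap k A (a ⬝ᵥ Q) := by
  simp only [linForm, Fintype.linearCombination_apply, map_sum, map_smul, linearTerm_X, map_sub,
    smul_sub, Finset.sum_sub_distrib, dotProduct, map_mul]
  exact congrArg _ (Finset.sum_congr rfl fun i _ => by
    rw [← algebraMap_eq, AlgHom.commutes, Algebra.smul_def])

lemma linearTerm_mem {I : Submodule k A} (hI : ∀ i, F (X i - C (Q i)) ∈ I)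
    (f : MvPolynomial σ k) : linearTerm F Q f ∈ I := by
  rw [linearTerm_apply]
  exact Submodule.sum_mem _ fun i _ => I.smul_mem _ (hI i)

lemma map_linearTerm (D : Dual k A) (f : MvPolynomial σ k) :
    D (linearTerm F Q f) = dirDeriv Q (fun i => D (F (X i - C (Q i)))) f := by
  simp only [linearTerm_apply, dirDeriv_apply, dotProduct, map_sum, map_smul, smul_eq_mul, mul_comm]

lemma taylor_remainder_mem {U I : Submodule k A} (h1 : 1 ≤ U) (hU : formImage F 1 ≤ U)
    (hI : ∀ i, F (X i - C (Q i)) ∈ I) (t : ℕ) {f : MvPolynomial σ k}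
    (hf : f ∈ homogeneousSubmodule σ k (t + 1)) :
    F f - algebraMap k A (eval Q f) - linearTerm F Q f ∈ I * (I * U ^ t) := by
  let R : MvPolynomial σ k →ₗ[k] A := F.toLinearMap -
    Algebra.linearMap k A ∘ₗ (aeval Q).toLinearMap - linearTerm F Q
  have hR (f) : R f = F f - algebraMap k A (eval Q f) - linearTerm F Q f := rfl
  have hR1 {h} (hh : h ∈ homogeneousSubmodule σ k 1) : R h = 0 := by
    obtain ⟨a, rfl⟩ := range_linForm.ge hh
    rw [hR, linearTerm_linForm, eval_linForm, sub_self]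
  rw [← hR]
  induction t generalizing f with
  | zero => exact hR1 hf ▸ Submodule.zero_mem _
  | succ t ih =>
    suffices hle : homogeneousSubmodule σ k (t + 1 + 1) ≤ (I * (I * U ^ (t + 1))).comap R from
      hle hf
    rw [← homogeneousSubmodule_one_pow, pow_succ, homogeneousSubmodule_one_pow, Submodule.mul_le]
    intro g hg h hh
    have hmul : R (g * h) = linearTerm F Q g * (linearTerm F Q h * 1) + R g * F h := by
      have hRh := hR1 hh
      rw [hR] at hRh
      simp only [hR, linearTerm_mul, map_mul, Algebra.smul_def]
      linear_combination (algebraMap k A (eval Q g) + linearTerm F Q g) * hRh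
    rw [Submodule.mem_comap, hmul]
    refine Submodule.add_mem _ (Submodule.mul_mem_mul (linearTerm_mem hI g) (Submodule.mul_mem_mul
      (linearTerm_mem hI h) (one_le_pow_of_one_le' h1 _ (Submodule.one_le.mp le_rfl)))) ?_
    have hprod := Submodule.mul_mem_mul (ih hg) (hU (Submodule.mem_map_of_mem hh))
    rwa [mul_assoc, mul_assoc, ← pow_succ] at hprod

end Taylor

section Tangent

variable {σ k ι : Type*} [Field k]

/-- The value at the point of index `p`, as an algebra map on `ι`-indexed dual numbers. -/
def pointEval (p : ι) : (ι → DualNumber k) →ₐ[k] k :=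
  (TrivSqZeroExt.fstHom k k k).comp (Pi.evalAlgHom k (fun _ => DualNumber k) p)

lemma pointEval_jet (P w : ι → σ → k) (p : ι) (f : MvPolynomial σ k) :
    pointEval p (jet P w f) = eval (P p) f :=
  fst_jet P w f p

/-- The jets of linear forms that vanish at the point of index `p`. -/
def vanishingLinearJets (P w : ι → σ → k) (p : ι) : Submodule k (ι → DualNumber k) :=
  formImage (jet P w) 1 ⊓ LinearMap.ker (pointEval p).toLinearMap

variable {P w : ι → σ → k} {p : ι}

lemma jet_X_sub_C_mem_vanishingLinearJets (h1 : 1 ≤ formImage (jet P w) 1) (i : σ) :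
    jet P w (X i - C (P p i)) ∈ vanishingLinearJets P w p := by
  refine ⟨?_, ?_⟩
  · rw [map_sub, ← algebraMap_eq, AlgHom.commutes]
    exact Submodule.sub_mem _ (Submodule.mem_map_of_mem (isHomogeneous_X k i))
      (h1 (Submodule.algebraMap_mem _))
  · exact (pointEval_jet P w p _).trans (by simp)

variable [Fintype σ]

lemma finrank_vanishingLinearJets_lt [Finite ι] (h1 : 1 ≤ formImage (jet P w) 1) :
    finrank k ↥(vanishingLinearJets P w p) < Fintype.card σ := by
  refine (Submodule.finrank_lt_finrank_of_lt ?_).trans_le (finrank_formImage_one_le (jet P w))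
  refine lt_of_le_of_ne inf_le_left fun heq => ?_
  have hmem : (1 : ι → DualNumber k) ∈ vanishingLinearJets P w p :=
    heq ▸ Submodule.one_le.mp h1
  exact one_ne_zero ((map_one (pointEval p : (ι → DualNumber k) →ₐ[k] k)).symm.trans hmem.2)

variable [Fintype ι] {L : σ → k} {c : ι → k} {d m : ℕ}

lemma IsRelation.exists_jet_ne_zero (hrel : IsRelation L P d w c) (hwp : w p = 0) (hcp : c p ≠ 0)
    {f : MvPolynomial σ k} (hf : f ∈ homogeneousSubmodule σ k d) (hfp : eval (P p) f ≠ 0) :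
    ∃ q, q ≠ p ∧ jet P w f q ≠ 0 := by
  by_contra! hoff
  have hsum := hrel.vanishes f hf
  rw [jetFunctional_apply, Fintype.sum_eq_single p fun q hq => by simp [hoff q hq], fst_jet,
    snd_jet, hwp, map_zero, LinearMap.zero_apply, zero_add] at hsum
  exact mul_ne_zero hcp hfp hsum

lemma IsRelation.not_vanishingLinearJets_le (hrel : IsRelation L P d w c)
    (hLP : ∀ p, L ⬝ᵥ P p = 1) (hP : Function.Injective P) (hwp : w p = 0) (hcp : c p ≠ 0)
    (hd : (m + 1) * (Fintype.card σ - 1) ≤ d) :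
    ¬vanishingLinearJets P w p ≤ vanishingLinearJets P w p *
      (vanishingLinearJets P w p * formImage (jet P w) 1 ^ m) := by
  intro hle
  have h1 := one_le_formImage_jet hLP hrel.tangent
  obtain ⟨g, hg, hgp, hgI⟩ := exists_mem_pow_mul_eq_zero h1 inf_le_left inf_le_right hle
  have hdeg : (m + 1) * finrank k ↥(vanishingLinearJets P w p) ≤ d :=
    (Nat.mul_le_mul_left _ (Nat.le_sub_one_of_lt (finrank_vanishingLinearJets_lt h1))).trans hd
  have hgd := pow_le_pow_right' h1 hdeg hg
  rw [formImage_one_pow] at hgd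
  obtain ⟨f, hf, rfl⟩ := hgd
  have hfp : eval (P p) f = 1 := (pointEval_jet P w p f).symm.trans hgp
  obtain ⟨q, hq, hfq⟩ := hrel.exists_jet_ne_zero hwp hcp hf (hfp ▸ one_ne_zero)
  obtain ⟨i, hi⟩ := Function.ne_iff.mp (hP.ne hq)
  have hunit : IsUnit (jet P w (X i - C (P p i)) q) := by
    rw [TrivSqZeroExt.isUnit_iff_isUnit_fst, fst_jet]
    simpa using sub_ne_zero.mpr hi
  exact hfq (hunit.mul_left_eq_zero.mp
    (congrFun (hgI _ (jet_X_sub_C_mem_vanishingLinearJets h1 i)) q))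

-- A functional that kills `I * (I * U ^ m)` but not `I` is a tangent vector at `P p`.
lemma IsRelation.exists_tangent (hrel : IsRelation L P d w c)
    (hLP : ∀ p, L ⬝ᵥ P p = 1) (hP : Function.Injective P) (hwp : w p = 0) (hcp : c p ≠ 0)
    (hd : (m + 1) * (Fintype.card σ - 1) ≤ d) :
    ∃ u : σ → k, u ≠ 0 ∧ L ⬝ᵥ u = 0 ∧
      ∀ f ∈ homogeneousSubmodule σ k (m + 1), jet P w f = 0 → dirDeriv (P p) u f = 0 := by
  obtain ⟨y, ⟨hyU, hyp⟩, hy⟩ := SetLike.not_le_iff_exists.mp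
    (hrel.not_vanishingLinearJets_le hLP hP hwp hcp hd)
  obtain ⟨D, hDy, hD⟩ := Submodule.exists_le_ker_of_notMem hy
  have h1 := one_le_formImage_jet hLP hrel.tangent
  let u : σ → k := fun i => D (jet P w (X i - C (P p i)))
  have hu (a : σ → k) : a ⬝ᵥ u = D (jet P w (linForm a) - algebraMap k _ (a ⬝ᵥ P p)) := by
    rw [← linearTerm_linForm, map_linearTerm, dirDeriv_linForm]
  refine ⟨u, ?_, ?_, fun f hf hf0 => ?_⟩
  · rintro hu0
    obtain ⟨g, hg, rfl⟩ := hyU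
    obtain ⟨a, rfl⟩ := range_linForm.ge hg
    have hap : a ⬝ᵥ P p = 0 := by
      rw [← eval_linForm, ← pointEval_jet P w]
      exact hyp
    have hua := hu a
    rw [hu0, dotProduct_zero, hap, map_zero, sub_zero] at hua
    exact hDy hua.symm
  · rw [hu, jet_linForm_eq_one hLP hrel.tangent, hLP, map_one, sub_self, map_zero]
  · have hfp : eval (P p) f = 0 := by rw [← pointEval_jet P w, hf0, map_zero]
    have hrem := hD (taylor_remainder_mem h1 le_rfl
      (fun i => jet_X_sub_C_mem_vanishingLinearJets (p := p) h1 i) m hf)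
    rwa [hf0, hfp, map_zero, sub_zero, zero_sub, LinearMap.mem_ker, map_neg, neg_eq_zero,
      map_linearTerm] at hrem

end Tangent

section Rigidity

variable {σ k ι : Type*} [Field k]

lemma finrank_formImage_zero_le {A : Type*} [CommRing A] [Algebra k A]
    (F : MvPolynomial σ k →ₐ[k] A) : finrank k ↥(formImage F 0) ≤ 1 := by
  rw [← formImage_one_pow, pow_zero, Submodule.one_eq_span]
  simpa using finrank_span_le_card (R := k) ({1} : Set A)

lemma finrank_formImage_concave [Infinite k] {A : Type*} [CommRing A] [Algebra k A]
    [FiniteDimensional k A] {F : MvPolynomial σ k →ₐ[k] A} (h1 : 1 ≤ formImage F 1) {s t : ℕ}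
    (hs : finrank k ↥(formImage F (s + 1)) ≤ finrank k ↥(formImage F s) + (s + 1))
    (hst : s ≤ t) :
    finrank k ↥(formImage F (t + 2)) + finrank k ↥(formImage F t) ≤
      2 * finrank k ↥(formImage F (t + 1)) := by
  rw [← formImage_one_pow F (s + 1), ← formImage_one_pow F s] at hs
  rw [← formImage_one_pow F (t + 2), ← formImage_one_pow F (t + 1), ← formImage_one_pow F t]
  exact finrank_pow_concave h1 hs hst

instance finiteDimensional_homogeneousSubmodule [Finite σ] (t : ℕ) :
    FiniteDimensional k (homogeneousSubmodule σ k t) :=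
  Module.Finite.iff_fg.mpr (homogeneousSubmodule_fg σ k t)

variable {P w u : ι → σ → k}

lemma jet_eq_zero_of_jet_eq_zero [Finite σ] (huw : ∀ p, w p ≠ 0 → u p = w p) {f : MvPolynomial σ k}
    (hf : jet P u f = 0) : jet P w f = 0 := by
  cases nonempty_fintype σ
  funext p
  obtain ⟨heval, hderiv⟩ := jet_apply_eq_zero_iff.mp (congrFun hf p)
  refine jet_apply_eq_zero_iff.mpr ⟨heval, ?_⟩
  by_cases hwp : w p = 0
  · rw [hwp, map_zero, LinearMap.zero_apply]
  · rwa [← huw p hwp]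

variable [Fintype σ] {L : σ → k}

-- In degrees at least `2` the growth bound passes from `w` to `u`, by concavity.
lemma finrank_formImage_jet_le [Infinite k] [Finite ι] (hLP : ∀ p, L ⬝ᵥ P p = 1)
    (hLu : ∀ p, L ⬝ᵥ u p = 0) (huw : ∀ p, w p ≠ 0 → u p = w p)
    (hu : ∀ f ∈ homogeneousSubmodule σ k 3, jet P w f = 0 → jet P u f = 0)
    (hstep : ∀ t, finrank k ↥(formImage (jet P w) (t + 1)) ≤
      finrank k ↥(formImage (jet P w) t) + 3) {d : ℕ} (hd : 3 ≤ d) :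
    finrank k ↥(formImage (jet P u) d) ≤ 3 * d + 1 := by
  let H (v : ι → σ → k) (t : ℕ) : ℕ := finrank k ↥(formImage (jet P v) t)
  have hw3 : H w 3 ≤ 1 + 3 * 3 :=
    calc H w 3 ≤ H w 0 + 3 * 3 :=
          le_add_mul_of_forall_step_le (Nat.zero_le 3) fun t _ => hstep t
      _ ≤ 1 + 3 * 3 := Nat.add_le_add_right (finrank_formImage_zero_le _) _
  have h3 : H u 3 ≤ H w 3 := finrank_map_le_finrank_map _ _ _ hu
  have h2 : H w 2 ≤ H u 2 :=
    finrank_map_le_finrank_map _ _ _ fun f _ => jet_eq_zero_of_jet_eq_zero huw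
  have h32 : H u (2 + 1) ≤ H u 2 + 3 := (h3.trans (hstep 2)).trans (Nat.add_le_add_right h2 3)
  have hconcave (t : ℕ) (ht : 2 ≤ t) : H u (t + 2) + H u t ≤ 2 * H u (t + 1) :=
    finrank_formImage_concave (one_le_formImage_jet hLP hLu) h32 ht
  have hbound : H u d ≤ H u 3 + 3 * (d - 3) := le_add_mul_of_forall_step_le hd fun t ht =>
    step_le_of_concave hconcave h32 ((Nat.le_succ 2).trans ht)
  change H u d ≤ 3 * d + 1
  omega

variable [Fintype ι]

lemma dual_pi_dualNumber_apply [DecidableEq ι] (G : Dual k (ι → DualNumber k))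
    (b : ι → DualNumber k) :
    G b = ∑ p, (G (Pi.single p (TrivSqZeroExt.inr 1)) * (b p).snd +
      G (Pi.single p (TrivSqZeroExt.inl 1)) * (b p).fst) := by
  conv_lhs => rw [← Finset.univ_sum_single b, map_sum]
  refine Finset.sum_congr rfl fun p _ => ?_
  have hsplit : b p = (b p).snd • (TrivSqZeroExt.inr 1 : DualNumber k)
      + (b p).fst • (TrivSqZeroExt.inl 1 : DualNumber k) :=
    TrivSqZeroExt.ext (by simp) (by simp)
  conv_lhs => rw [hsplit]
  rw [Pi.single_add, Pi.single_smul, Pi.single_smul, map_add, map_smul, map_smul, smul_eq_mul,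
    smul_eq_mul, mul_comm, mul_comm (b p).fst]

variable {c : ι → k} {d m : ℕ}

-- Otherwise some functional kills the jets of degree `d` forms and the component at `p`; it is a
-- non-trivial relation without a term at `p`.
lemma IsRigid.two_mul_card_le (hrigid : IsRigid L P d) (hLu : ∀ p, L ⬝ᵥ u p = 0)
    (hu : ∀ p, u p ≠ 0) : 2 * Fintype.card ι ≤ finrank k ↥(formImage (jet P u) d) + 2 := by
  classical
  by_contra! hlt
  obtain ⟨p⟩ : Nonempty ι := Fintype.card_pos_iff.mp (by omega)
  let E := LinearMap.range (LinearMap.single k (fun _ : ι => DualNumber k) p)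
  have hE : finrank k E ≤ 2 := (LinearMap.finrank_range_le _).trans finrank_dualNumber.le
  have hproper : formImage (jet P u) d ⊔ E < ⊤ := by
    refine Submodule.lt_top_of_finrank_lt_finrank ?_
    rw [finrank_pi_dualNumber]
    exact (Submodule.finrank_add_le_finrank_add_finrank _ _).trans_lt (by omega)
  obtain ⟨G, hG, hker⟩ := Submodule.exists_le_ker_of_lt_top _ hproper
  have hGE (z : DualNumber k) : G (Pi.single p z) = 0 := hker (Submodule.mem_sup_right ⟨z, rfl⟩)
  have hrel : IsRelation L P d (fun q => G (Pi.single q (TrivSqZeroExt.inr 1)) • u q)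
      fun q => G (Pi.single q (TrivSqZeroExt.inl 1)) := by
    refine ⟨fun q => by rw [dotProduct_smul, hLu, smul_zero], fun f hf => ?_⟩
    have hGf : G (jet P u f) = 0 := hker (Submodule.mem_sup_left (Submodule.mem_map_of_mem hf))
    rw [dual_pi_dualNumber_apply] at hGf
    simpa only [jetFunctional_jet, fst_jet, snd_jet, map_smul, LinearMap.smul_apply, smul_eq_mul]
      using hGf
  obtain ⟨hw0, hc0⟩ := hrigid _ _ hrel p (by simp only [hGE, zero_smul]) (hGE _)
  refine hG (LinearMap.ext fun b => ?_)
  rw [dual_pi_dualNumber_apply, LinearMap.zero_apply]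
  refine Finset.sum_eq_zero fun q _ => ?_
  rw [(smul_eq_zero.mp (congrFun hw0 q)).resolve_right (hu q), congrFun hc0 q, Pi.zero_apply,
    zero_mul, zero_mul, add_zero]

lemma IsRelation.exists_directions (hrel : IsRelation L P d w c)
    (hLP : ∀ p, L ⬝ᵥ P p = 1) (hP : Function.Injective P) (hwc : ∀ p, w p = 0 → c p ≠ 0)
    (hd : (m + 1) * (Fintype.card σ - 1) ≤ d) :
    ∃ u : ι → σ → k, (∀ p, u p ≠ 0) ∧ (∀ p, L ⬝ᵥ u p = 0) ∧ (∀ p, w p ≠ 0 → u p = w p) ∧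
      ∀ f ∈ homogeneousSubmodule σ k (m + 1), jet P w f = 0 → jet P u f = 0 := by
  have hpoint (p : ι) : ∃ u : σ → k, u ≠ 0 ∧ L ⬝ᵥ u = 0 ∧ (w p ≠ 0 → u = w p) ∧
      ∀ f ∈ homogeneousSubmodule σ k (m + 1), jet P w f = 0 → dirDeriv (P p) u f = 0 := by
    by_cases hwp : w p = 0
    · obtain ⟨u, hu, hLu, hjet⟩ := hrel.exists_tangent hLP hP hwp (hwc p hwp) hd
      exact ⟨u, hu, hLu, fun h => absurd hwp h, hjet⟩
    · refine ⟨w p, hwp, hrel.tangent p, fun _ => rfl, fun f _ hf => ?_⟩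
      have hfp : jet P w f p = 0 := congrFun hf p
      exact (jet_apply_eq_zero_iff.mp hfp).2
  choose u hu hLu huw hjet using hpoint
  refine ⟨u, hu, hLu, huw, fun f hf hf0 => ?_⟩
  funext p
  have hfp : jet P w f p = 0 := congrFun hf0 p
  exact jet_apply_eq_zero_iff.mpr ⟨(jet_apply_eq_zero_iff.mp hfp).1, hjet p f hf hf0⟩

theorem IsRigid.eq_zero_of_isRelation [Infinite k] (hrigid : IsRigid L P d)
    (hσ : Fintype.card σ = 4) (hLP : ∀ p, L ⬝ᵥ P p = 1) (hP : Function.Injective P)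
    (hspan : ∀ a, (∀ p, a ⬝ᵥ P p = 0) → a = 0) (hd : 9 ≤ d)
    (hupper : 2 * Fintype.card ι + 2 ≤ 4 * d) (hlower : 3 * d + 4 ≤ 2 * Fintype.card ι)
    (hrel : IsRelation L P d w c) : w = 0 ∧ c = 0 := by
  by_contra hne
  have : Nonempty ι := Fintype.card_pos_iff.mp (by omega)
  obtain ⟨w, c, p, hrel, hwc, hp⟩ := hrigid.exists_isBasePoint ⟨w, c, hrel, hne⟩
  have hstep := hrel.finrank_formImage_jet_succ_le hσ hLP hP hspan hwc hp hupper
  obtain ⟨u, hu, hLu, huw, hjet⟩ := hrel.exists_directions (m := 2) hLP hP hwc (by omega)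
  have hle := finrank_formImage_jet_le hLP hLu huw hjet hstep (d := d) (by omega)
  have hge := hrigid.two_mul_card_le hLu hu
  omega

end Rigidity

section Gradients

variable {σ k : Type*} [Field k] {d : ℕ} {f : MvPolynomial σ k}

lemma finrank_homogeneousSubmodule_fin (n : ℕ) :
    finrank k (homogeneousSubmodule (Fin (n + 1)) k d) = (n + d).choose n := by
  let e : {m : Fin (n + 1) →₀ ℕ | m.degree = d} ≃ Sym (Fin (n + 1)) d :=
    (Equiv.subtypeEquivRight fun _ => Iff.rfl).trans (Sym.equivNatSum (Fin (n + 1)) d).symm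
  let _ : Fintype {m : Fin (n + 1) →₀ ℕ | m.degree = d} := Fintype.ofEquiv _ e.symm
  rw [homogeneousSubmodule_eq_finsupp_supported,
    (AddMonoidAlgebra.supportedEquivFinsupp (R := k) (S := k)
      {m : Fin (n + 1) →₀ ℕ | m.degree = d}).finrank_eq,
    finrank_finsupp_self, Fintype.card_congr e, Sym.card_sym_eq_choose, Fintype.card_fin,
    Nat.add_right_comm, Nat.add_sub_cancel, Nat.choose_symm_add]

lemma eval_smul_of_isHomogeneous [Finite σ] (hf : f.IsHomogeneous d) (a : k) (v : σ → k) :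
    eval (a • v) f = a ^ d * eval v f := by
  cases nonempty_fintype σ
  rw [eval_eq', eval_eq', Finset.mul_sum]
  refine Finset.sum_congr rfl fun m hm => ?_
  have hdeg : ∑ i, m i = d := by
    rw [← Finsupp.degree_eq_sum, Finsupp.degree_eq_weight_one]
    exact hf (mem_support_iff.mp hm)
  simp only [Pi.smul_apply, smul_eq_mul, mul_pow, Finset.prod_mul_distrib]
  rw [Finset.prod_pow_eq_pow_sum, hdeg]
  ring

variable [Fintype σ]

lemma dirDeriv_smul_of_isHomogeneous (hf : f.IsHomogeneous d) (a : k) (v w : σ → k) :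
    dirDeriv (a • v) w f = a ^ (d - 1) * dirDeriv v w f := by
  simp only [dirDeriv_apply, eval_smul_of_isHomogeneous hf.pderiv, dotProduct, Finset.mul_sum]
  exact Finset.sum_congr rfl fun i _ => by ring

lemma dirDeriv_self_of_isHomogeneous (hf : f.IsHomogeneous d) (v : σ → k) :
    dirDeriv v v f = d * eval v f := by
  simpa [dirDeriv_apply, dotProduct] using congrArg (eval v) hf.sum_X_mul_pderiv

variable {ι : Type*} [Fintype ι]

/-- The functional `f ↦ ∑ p, dirDeriv (P p) (v p) f` on the forms of degree `d`. Its kernel, as a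
map in `v`, consists of the linear relations between the gradients at the points `P p`. -/
def gradientFunctional (d : ℕ) (P : ι → σ → k) :
    (ι → σ → k) →ₗ[k] Dual k (homogeneousSubmodule σ k d) :=
  (homogeneousSubmodule σ k d).dualRestrict ∘ₗ ∑ p, dirDeriv (P p) ∘ₗ LinearMap.proj p

lemma gradientFunctional_apply (P v : ι → σ → k) (f : homogeneousSubmodule σ k d) :
    gradientFunctional d P v f = ∑ p, dirDeriv (P p) (v p) f.1 := by
  simp [gradientFunctional]

lemma gradientFunctional_eq_zero_iff {P v : ι → σ → k} : gradientFunctional d P v = 0 ↔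
    ∀ f ∈ homogeneousSubmodule σ k d, ∑ p, dirDeriv (P p) (v p) f = 0 := by
  simp [LinearMap.ext_iff, gradientFunctional_apply]

lemma mem_dualCoannihilator_range_gradientFunctional {P : ι → σ → k}
    {f : homogeneousSubmodule σ k d} :
    f ∈ (LinearMap.range (gradientFunctional d P)).dualCoannihilator ↔
      ∀ p v, dirDeriv (P p) v f.1 = 0 := by
  classical
  rw [Submodule.mem_dualCoannihilator]
  constructor
  · intro hf p v
    have hsum := hf _ ⟨Pi.single p v, rfl⟩
    rw [gradientFunctional_apply, Fintype.sum_eq_single p] at hsum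
    · rwa [Pi.single_eq_same] at hsum
    · intro q hq
      rw [Pi.single_eq_of_ne hq, map_zero, LinearMap.zero_apply]
  · rintro hf _ ⟨v, rfl⟩
    rw [gradientFunctional_apply]
    exact Finset.sum_eq_zero fun p _ => hf p (v p)

variable {L : σ → k} {P w : ι → σ → k}

-- By Euler's formula a value at `P p` is a derivative in the direction `P p`.
lemma isRelation_mul_iff {b : ι → k} : IsRelation L P d w (fun p => d * b p) ↔
    (∀ p, L ⬝ᵥ w p = 0) ∧ gradientFunctional d P (fun p => w p + b p • P p) = 0 := by
  have hterm (f : MvPolynomial σ k) (hf : f ∈ homogeneousSubmodule σ k d) (p : ι) :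
      dirDeriv (P p) (w p + b p • P p) f =
        dirDeriv (P p) (w p) f + d * b p * eval (P p) f := by
    rw [map_add, map_smul, LinearMap.add_apply, LinearMap.smul_apply, smul_eq_mul,
      dirDeriv_self_of_isHomogeneous hf]
    ring
  rw [gradientFunctional_eq_zero_iff]
  constructor
  · intro hrel
    refine ⟨hrel.tangent, fun f hf => ?_⟩
    rw [← hrel.vanishes f hf, jetFunctional_jet]
    exact Finset.sum_congr rfl fun p _ => hterm f hf p
  · rintro ⟨hw, hzero⟩
    refine ⟨hw, fun f hf => ?_⟩
    rw [← hzero f hf, jetFunctional_jet]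
    exact Finset.sum_congr rfl fun p _ => (hterm f hf p).symm

end Gradients

section Terracini

variable {k : Type*} [Field k] {n d : ℕ}

lemma mem_doubleVanishing_iff (hdk : (d : k) ≠ 0) {f : MvPolynomial (Fin n) k}
    (hf : f.IsHomogeneous d) {v : Fin n → k} :
    f ∈ doubleVanishing k v ↔ ∀ w, dirDeriv v w f = 0 := by
  have hmem : f ∈ doubleVanishing k v ↔ eval v f = 0 ∧ ∀ i, eval v (pderiv i f) = 0 := by
    simp [doubleVanishing, evalLM]
  rw [hmem]
  constructor
  · rintro ⟨-, hgrad⟩ w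
    rw [dirDeriv_apply, funext hgrad]
    exact dotProduct_zero w
  · intro hzero
    have heuler := hzero v
    rw [dirDeriv_self_of_isHomogeneous hf] at heuler
    refine ⟨(mul_eq_zero.mp heuler).resolve_left hdk, fun i => ?_⟩
    simpa [dirDeriv_apply] using hzero (Pi.single i 1)

variable {ι : Type*} {Q : ι ↪ ProjSpace k n} {P : ι → Fin (n + 1) → k}

lemma exists_affine_representatives [Infinite k] [Finite ι] (Q : ι → ProjSpace k n) :
    ∃ (L : Fin (n + 1) → k) (P : ι → Fin (n + 1) → k), (∀ p, L ⬝ᵥ P p = 1) ∧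
      ∀ p, ∃ a : kˣ, a • P p = (Q p).rep := by
  obtain ⟨φ, hφ⟩ := exists_dual_forall_apply_ne_zero (K := k) (fun p => (Q p).rep)
    fun p => (Q p).rep_nonzero
  obtain ⟨L, rfl⟩ := (dotProductEquiv k (Fin (n + 1))).surjective φ
  refine ⟨L, fun p => (L ⬝ᵥ (Q p).rep)⁻¹ • (Q p).rep, fun p => ?_, fun p => ?_⟩
  · rw [dotProduct_smul]
    exact inv_mul_cancel₀ (hφ p)
  · exact ⟨Units.mk0 _ (hφ p), smul_inv_smul₀ (hφ p) _⟩

lemma injective_of_smul_eq_rep (hP : ∀ p, ∃ a : kˣ, a • P p = (Q p).rep) :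
    Function.Injective P := by
  intro p q hpq
  obtain ⟨a, ha⟩ := hP p
  obtain ⟨b, hb⟩ := hP q
  apply Q.injective
  rw [← (Q p).mk_rep, ← (Q q).mk_rep, Projectivization.mk_eq_mk_iff]
  exact ⟨a * b⁻¹, by rw [← hb, ← ha, hpq, mul_smul, inv_smul_smul]⟩

variable [Fintype ι]

lemma eq_zero_of_spans (hP : ∀ p, ∃ a : kˣ, a • P p = (Q p).rep)
    (hspan : Spans k n (Finset.univ.map Q)) {a : Fin (n + 1) → k} (ha : ∀ p, a ⬝ᵥ P p = 0) :
    a = 0 := by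
  have hker : ⊤ ≤ LinearMap.ker (dotProductEquiv k _ a) := by
    rw [← show Submodule.span k _ = ⊤ from hspan, Submodule.span_le]
    rintro _ ⟨_, hp, rfl⟩
    obtain ⟨p, -, rfl⟩ := Finset.mem_map.mp hp
    obtain ⟨b, hb⟩ := hP p
    rw [← hb]
    simp [Units.smul_def, ha p]
  exact (dotProductEquiv k _).map_eq_zero_iff.mp (LinearMap.ker_eq_top.mp (top_le_iff.mp hker))

lemma inf_doubleVanishing_eq_map_dualCoannihilator (hdk : (d : k) ≠ 0)
    (hP : ∀ p, ∃ a : kˣ, a • P p = (Q p).rep) :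
    homogeneousSubmodule (Fin (n + 1)) k d ⊓ ⨅ p ∈ Finset.univ.map Q, doubleVanishing k p.rep =
      (LinearMap.range (gradientFunctional d P)).dualCoannihilator.map (Submodule.subtype _) := by
  have hvanish {f : MvPolynomial (Fin (n + 1)) k} (hf : f.IsHomogeneous d) (p : ι) :
      f ∈ doubleVanishing k (Q p).rep ↔ ∀ v, dirDeriv (P p) v f = 0 := by
    obtain ⟨a, ha⟩ := hP p
    simp [mem_doubleVanishing_iff hdk hf, ← ha, Units.smul_def, dirDeriv_smul_of_isHomogeneous hf]
  ext f
  simp only [Submodule.mem_inf, Submodule.mem_iInf, Finset.forall_mem_map, Finset.mem_univ,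
    forall_const, Submodule.mem_map, Subtype.exists, Submodule.subtype_apply,
    mem_dualCoannihilator_range_gradientFunctional]
  constructor
  · rintro ⟨hf, hdouble⟩
    exact ⟨f, hf, fun p => (hvanish hf p).mp (hdouble p), rfl⟩
  · rintro ⟨f, hf, hgrad, rfl⟩
    exact ⟨hf, fun p => (hvanish hf p).mpr (hgrad p)⟩

lemma h1_eq_finrank_ker (hdk : (d : k) ≠ 0) (hP : ∀ p, ∃ a : kˣ, a • P p = (Q p).rep) :
    h1 k n d (Finset.univ.map Q) = finrank k (LinearMap.ker (gradientFunctional d P)) := by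
  have hh0 : h0 k n d (Finset.univ.map Q) =
      finrank k (LinearMap.range (gradientFunctional d P)).dualCoannihilator := by
    rw [h0, inf_doubleVanishing_eq_map_dualCoannihilator hdk hP, Submodule.finrank_map_subtype_eq]
  have hrank := LinearMap.finrank_range_add_finrank_ker (gradientFunctional d P)
  have hdual := Subspace.finrank_add_finrank_dualCoannihilator_eq
    (LinearMap.range (gradientFunctional d P))
  rw [finrank_homogeneousSubmodule_fin] at hdual
  have hspace : finrank k (ι → Fin (n + 1) → k) = Fintype.card ι * (n + 1) := by
    simp [finrank_pi_fintype]
  rw [h1, hh0, Finset.card_map, Finset.card_univ]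
  rw [hspace] at hrank
  zify at hrank hdual
  linarith

variable {L : Fin (n + 1) → k}

lemma eq_zero_of_gradientFunctional_eq_zero (hdk : (d : k) ≠ 0)
    (hP : ∀ p, ∃ a : kˣ, a • P p = (Q p).rep) (hmin : ∀ A ⊂ Finset.univ.map Q, h1 k n d A = 0)
    {v : ι → Fin (n + 1) → k} (hv : gradientFunctional d P v = 0) {p : ι} (hvp : v p = 0) :
    v = 0 := by
  classical
  let Q' : {q // q ≠ p} ↪ ProjSpace k n := (Function.Embedding.subtype _).trans Q
  have hproper : Finset.univ.map Q' ⊂ Finset.univ.map Q := by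
    rw [← Finset.map_map, Finset.map_ssubset_map, Finset.ssubset_univ_iff]
    intro huniv
    simpa using huniv.ge (Finset.mem_univ p)
  have hker : LinearMap.ker (gradientFunctional d fun q : {q // q ≠ p} => P q) = ⊥ := by
    rw [← Submodule.finrank_eq_zero (R := k)]
    exact_mod_cast (h1_eq_finrank_ker (Q := Q') hdk fun q => hP q).symm.trans (hmin _ hproper)
  have hrestrict : (fun q : {q // q ≠ p} => v q) ∈
      LinearMap.ker (gradientFunctional d fun q : {q // q ≠ p} => P q) := by
    refine gradientFunctional_eq_zero_iff.mpr fun f hf => ?_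
    have hsum := gradientFunctional_eq_zero_iff.mp hv f hf
    rwa [Fintype.sum_eq_add_sum_subtype_ne _ p, hvp, map_zero, LinearMap.zero_apply,
      zero_add] at hsum
  rw [hker, Submodule.mem_bot] at hrestrict
  funext q
  by_cases hq : q = p
  · rw [hq, hvp, Pi.zero_apply]
  · exact congrFun hrestrict ⟨q, hq⟩

lemma isRigid_of_h1_eq_zero (hdk : (d : k) ≠ 0) (hLP : ∀ p, L ⬝ᵥ P p = 1)
    (hP : ∀ p, ∃ a : kˣ, a • P p = (Q p).rep)
    (hmin : ∀ A ⊂ Finset.univ.map Q, h1 k n d A = 0) : IsRigid L P d := by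
  intro w c hrel p hwp hcp
  have hc : c = fun q => d * (c q / d) := funext fun q => (mul_div_cancel₀ _ hdk).symm
  rw [hc] at hrel
  have hzero := eq_zero_of_gradientFunctional_eq_zero hdk hP hmin
    (isRelation_mul_iff.mp hrel).2 (p := p) (by simp [hwp, hcp])
  have hc0 (q : ι) : c q / d = 0 := by
    have hL : L ⬝ᵥ (w q + (c q / d) • P q) = 0 := by
      rw [congrFun hzero q, Pi.zero_apply, dotProduct_zero]
    rwa [dotProduct_add, hrel.tangent, dotProduct_smul, hLP, zero_add, smul_eq_mul,
      mul_one] at hL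
  refine ⟨funext fun q => ?_, ?_⟩
  · simpa [hc0] using congrFun hzero q
  · rw [hc]
    funext q
    rw [hc0, mul_zero, Pi.zero_apply]

lemma exists_isRelation_of_h1_pos (hdk : (d : k) ≠ 0) (hLP : ∀ p, L ⬝ᵥ P p = 1)
    (hP : ∀ p, ∃ a : kˣ, a • P p = (Q p).rep) (hpos : 0 < h1 k n d (Finset.univ.map Q)) :
    ∃ w c, IsRelation L P d w c ∧ ¬(w = 0 ∧ c = 0) := by
  rw [h1_eq_finrank_ker hdk hP, Nat.cast_pos] at hpos
  obtain ⟨v, hv, hv0⟩ :=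
    Submodule.exists_mem_ne_zero_of_ne_bot (Submodule.one_le_finrank_iff.mp hpos)
  let b (p : ι) : k := L ⬝ᵥ v p
  refine ⟨fun p => v p - b p • P p, fun p => d * b p, isRelation_mul_iff.mpr ⟨fun p => ?_, ?_⟩, ?_⟩
  · rw [dotProduct_sub, dotProduct_smul, hLP, smul_eq_mul, mul_one, sub_self]
  · simpa using hv
  · rintro ⟨hw, hc⟩
    refine hv0 (funext fun p => ?_)
    have hb : b p = 0 := (mul_eq_zero.mp (congrFun hc p)).resolve_left hdk
    simpa [hb] using congrFun hw p

end Terracini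

end

theorem minTerracini_P3_gap_general (k : Type*) [Field k] [Infinite k] (d x : ℕ)
    (hdk : (d : k) ≠ 0) (hd : 9 ≤ d) (hx1 : 1 + (3 * d + 1) / 2 < x) (hx2 : x < 2 * d) :
    minTerracini k 3 d x = ∅ := by
  rw [Set.eq_empty_iff_forall_notMem]
  rintro S ⟨⟨hcard, hspan, -, hpos⟩, hmin⟩
  let Q : S ↪ ProjSpace k 3 := Function.Embedding.subtype _
  have hS : Finset.univ.map Q = S := Finset.attach_map_val
  have hcardS : Fintype.card S = x := (Fintype.card_coe S).trans hcard
  rw [← hS] at hspan hpos hmin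
  obtain ⟨L, P, hLP, hP⟩ := exists_affine_representatives Q
  obtain ⟨w, c, hrel, hne⟩ := exists_isRelation_of_h1_pos hdk hLP hP hpos
  exact hne ((isRigid_of_h1_eq_zero hdk hLP hP hmin).eq_zero_of_isRelation (Fintype.card_fin 4) hLP
    (injective_of_smul_eq_rep hP) (fun a => eq_zero_of_spans hP hspan) hd (by omega) (by omega)
    hrel)

/-- Theorem: for `d ≥ 17` and `1 + ⌈3d/2⌉ < x < 2d`, `T(3,d;x)' = ∅`. -/
theorem minTerracini_P3_gap
    (k : Type*) [Field k] [IsAlgClosed k] [CharZero k]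
    (d x : ℕ) (hd : 17 ≤ d) (hx1 : 1 + (3 * d + 1) / 2 < x) (hx2 : x < 2 * d) :
    minTerracini k 3 d x = ∅ :=
  minTerracini_P3_gap_general k d x (Nat.cast_ne_zero.mpr (by omega)) (by omega) hx1 hx2
end

section
/- For every integer d ≥ 5, T(3,d;2d)' ≠ ∅; that is, there exists a set S of 2d points in P^3 which is minimally Terracini with respect to O(d) (such sets are obtained as divisors in the square root of the degree-d linear system on a linearly normal elliptic curve in P^3, the smooth complete intersection of two quadric surfaces). In particular, the bound x < 2d in the emptiness theorem for T(3,d;x)' is sharp. -/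
open MvPolynomial

/-!
The number `h¹` of a set of double points counts the linear relations between the tangent spaces
of the Veronese variety at these points. The elliptic normal quartic of the paper is replaced by
its nodal degeneration `t ↦ (1 + t ^ 4 : t : t ^ 2 : t ^ 3)`, again a complete intersection of two
quadrics. Forms of degree `d` restrict to polynomials of degree at most `4 * d` whose two extreme
coefficients agree, and `(X ^ (2 * d) - 1) ^ 2` is such a polynomial: the residue theorem then
gives a relation between tangent vectors of the curve at the `2 * d`-th roots of unity. For fewer
than `2 * d` points on the curve, forms of degree `d` divisible by one of the two quadrics show
that every relation involves only directions tangent to the curve, and Hermite interpolation by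
restrictions divisible by `X` excludes those.
-/

open scoped Polynomial

namespace Terracini

section DirectionalDerivative

variable {R σ : Type*} [CommSemiring R]

lemma eval_smul_of_isHomogeneous {f : MvPolynomial σ R} {d : ℕ} (hf : f.IsHomogeneous d) (a : R)
    (v : σ → R) : eval (a • v) f = a ^ d * eval v f := by
  rw [eval_eq, eval_eq, Finset.mul_sum]
  refine Finset.sum_congr rfl fun m hm => ?_
  simp only [Pi.smul_apply, smul_eq_mul, mul_pow, Finset.prod_mul_distrib]
  rw [Finset.prod_pow_eq_pow_sum, ← hf.degree_eq_sum_deg_support hm]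
  ring

/-- The point with parameter `t` on the curve with polynomial parametrization `γ`. -/
def curvePoint (γ : σ → R[X]) (t : R) : σ → R :=
  fun i => (γ i).eval t

/-- The velocity at the parameter `t` of the curve with polynomial parametrization `γ`. -/
noncomputable def curveVelocity (γ : σ → R[X]) (t : R) : σ → R :=
  curvePoint (fun i => Polynomial.derivative (γ i)) t

lemma eval_aeval_polynomial (γ : σ → R[X]) (f : MvPolynomial σ R) (t : R) :
    (aeval γ f).eval t = eval (curvePoint γ t) f := by
  have hcomp := comp_aeval_apply (f := γ) (Polynomial.aeval t) f
  rwa [Polynomial.coe_aeval_eq_eval, aeval_eq_eval] at hcomp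

variable [Fintype σ]

/-- The derivative of a polynomial at the point `v` in the direction `w`, as a linear function of
`w` and of the polynomial. -/
noncomputable def dirDeriv (v : σ → R) : (σ → R) →ₗ[R] Module.Dual R (MvPolynomial σ R) :=
  Fintype.linearCombination R fun i => (aeval v).toLinearMap ∘ₗ (pderiv i).toLinearMap

lemma dirDeriv_apply (v w : σ → R) (f : MvPolynomial σ R) :
    dirDeriv v w f = ∑ i, w i * eval v (pderiv i f) := by
  simp [dirDeriv, Fintype.linearCombination_apply, aeval_eq_eval]

lemma dirDeriv_single [DecidableEq σ] (v : σ → R) (i : σ) (f : MvPolynomial σ R) :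
    dirDeriv v (Pi.single i 1) f = eval v (pderiv i f) := by
  simp [dirDeriv_apply, Pi.single_apply]

@[simp]
lemma dirDeriv_C (v w : σ → R) (a : R) : dirDeriv v w (C a) = 0 := by
  simp [dirDeriv_apply]

@[simp]
lemma dirDeriv_X (v w : σ → R) (i : σ) : dirDeriv v w (X i) = w i := by
  classical
  simp [dirDeriv_apply, pderiv_X, Pi.single_apply]

lemma dirDeriv_mul (v w : σ → R) (f g : MvPolynomial σ R) :
    dirDeriv v w (f * g) = eval v f * dirDeriv v w g + eval v g * dirDeriv v w f := by
  simp only [dirDeriv_apply, pderiv_mul, map_add, map_mul, Finset.mul_sum,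
    ← Finset.sum_add_distrib]
  exact Finset.sum_congr rfl fun i _ => by ring

lemma dirDeriv_self {f : MvPolynomial σ R} {d : ℕ} (hf : f.IsHomogeneous d) (v : σ → R) :
    dirDeriv v v f = d * eval v f := by
  simpa [dirDeriv_apply] using congrArg (eval v) hf.sum_X_mul_pderiv

lemma eval_derivative_aeval (γ : σ → R[X]) (f : MvPolynomial σ R) (t : R) :
    (Polynomial.derivative (aeval γ f)).eval t =
      dirDeriv (curvePoint γ t) (curveVelocity γ t) f := by
  induction f using MvPolynomial.induction_on with
  | C a => simp
  | add p q hp hq => simp [hp, hq]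
  | mul_X p i hp =>
    simp only [map_mul, aeval_X, Polynomial.derivative_mul, Polynomial.eval_add,
      Polynomial.eval_mul, hp, eval_aeval_polynomial, dirDeriv_mul, dirDeriv_X, eval_X,
      curvePoint, curveVelocity]
    ring

lemma dirDeriv_curvePoint (γ : σ → R[X]) {f : MvPolynomial σ R} {d : ℕ} (hf : f.IsHomogeneous d)
    (a b t : R) :
    dirDeriv (curvePoint γ t) (a • curvePoint γ t + b • curveVelocity γ t) f =
      d * a * (aeval γ f).eval t + b * (Polynomial.derivative (aeval γ f)).eval t := by
  rw [map_add, map_smul, map_smul, LinearMap.add_apply, LinearMap.smul_apply,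
    LinearMap.smul_apply, dirDeriv_self hf, ← eval_derivative_aeval, ← eval_aeval_polynomial,
    smul_eq_mul, smul_eq_mul]
  ring

end DirectionalDerivative

section DoubleVanishing

variable {k : Type*} [Field k] {n d : ℕ}

lemma mem_doubleVanishing {v : Fin n → k} {f : MvPolynomial (Fin n) k} :
    f ∈ doubleVanishing k v ↔ eval v f = 0 ∧ ∀ i, eval v (pderiv i f) = 0 := by
  simp [doubleVanishing, evalLM, aeval_eq_eval, Submodule.mem_iInf]

lemma mem_doubleVanishing_smul_iff {f : MvPolynomial (Fin n) k} (hf : f.IsHomogeneous d)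
    {a : k} (ha : a ≠ 0) {v : Fin n → k} :
    f ∈ doubleVanishing k (a • v) ↔ f ∈ doubleVanishing k v := by
  simp [mem_doubleVanishing, eval_smul_of_isHomogeneous hf,
    eval_smul_of_isHomogeneous hf.pderiv, ha]

lemma mem_doubleVanishing_iff_dirDeriv {f : MvPolynomial (Fin n) k} (hf : f.IsHomogeneous d)
    (hd : (d : k) ≠ 0) {v : Fin n → k} :
    f ∈ doubleVanishing k v ↔ ∀ w, dirDeriv v w f = 0 := by
  rw [mem_doubleVanishing]
  constructor
  · rintro ⟨-, h⟩ w
    simp [dirDeriv_apply, h]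
  · intro h
    have hv : (d : k) * eval v f = 0 := dirDeriv_self hf v ▸ h v
    exact ⟨(mul_eq_zero.mp hv).resolve_left hd, fun i => dirDeriv_single v i f ▸ h _⟩

lemma finrank_homogeneousSubmodule (n d : ℕ) :
    Module.finrank k (homogeneousSubmodule (Fin (n + 1)) k d) = (n + d).choose n := by
  have hsupp : {m : Fin (n + 1) →₀ ℕ | m.degree = d} =
      ((Finset.univ : Finset (Fin (n + 1))).finsuppAntidiag d : Set (Fin (n + 1) →₀ ℕ)) := by
    ext m
    simp [Finset.mem_finsuppAntidiag, Finsupp.degree_eq_sum]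
  rw [homogeneousSubmodule_eq_finsupp_supported,
    (AddMonoidAlgebra.supportedEquivFinsupp _).finrank_eq, hsupp, Module.finrank_finsupp_self]
  simp only [Finset.coe_sort_coe, Fintype.card_coe]
  rw [Finset.card_finsuppAntidiag_nat_eq_choose, Finset.card_univ, Fintype.card_fin,
    Nat.add_right_comm, Nat.add_sub_cancel, Nat.choose_symm_add]

end DoubleVanishing

section TangentRelations

variable {k ι : Type*} [Field k] {n d : ℕ}

/-- The functional `f ↦ ∑ i, ∂_{c i} f (v i)` on forms of degree `d`, as a linear function of the
directions `c`. Its range is the space of conditions imposed by the double points at the `v i`. -/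
noncomputable def tangentSum [Fintype ι] (d : ℕ) (v : ι → Fin n → k) :
    (ι → Fin n → k) →ₗ[k] Module.Dual k (homogeneousSubmodule (Fin n) k d) :=
  ∑ i, (homogeneousSubmodule (Fin n) k d).subtype.dualMap ∘ₗ dirDeriv (v i) ∘ₗ LinearMap.proj i

lemma tangentSum_apply [Fintype ι] (v c : ι → Fin n → k)
    (f : homogeneousSubmodule (Fin n) k d) :
    tangentSum d v c f = ∑ i, dirDeriv (v i) (c i) f := by
  simp [tangentSum]

lemma mem_dualCoannihilator_range_tangentSum [Fintype ι] {v : ι → Fin n → k}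
    {f : homogeneousSubmodule (Fin n) k d} :
    f ∈ (LinearMap.range (tangentSum d v)).dualCoannihilator ↔
      ∀ i w, dirDeriv (v i) w (f : MvPolynomial (Fin n) k) = 0 := by
  classical
  simp only [Submodule.mem_dualCoannihilator, LinearMap.mem_range, forall_exists_index,
    forall_apply_eq_imp_iff, tangentSum_apply]
  refine ⟨fun h i w => ?_, fun h c => Finset.sum_eq_zero fun i _ => h i (c i)⟩
  have hsingle := h (Pi.single i w)
  rwa [Finset.sum_eq_single i (fun j _ hj => by simp [hj]) (by simp), Pi.single_eq_same]
    at hsingle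

/-- The vectors `v i` are homogeneous coordinates of the points `p i`. -/
def HasCoordinates (p : ι → ProjSpace k n) (v : ι → Fin (n + 1) → k) : Prop :=
  ∀ i, ∃ a : kˣ, a • v i = (p i).rep

variable {p : ι ↪ ProjSpace k n} {v : ι → Fin (n + 1) → k}

lemma h0_map_eq_finrank (hp : HasCoordinates p v) (hd : (d : k) ≠ 0) (T : Finset ι) :
    h0 k n d (T.map p) = Module.finrank k
      (LinearMap.range (tangentSum d fun t : T => v t)).dualCoannihilator := by
  have hmem {f : MvPolynomial (Fin (n + 1)) k} (hf : f.IsHomogeneous d) (i : ι) :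
      f ∈ doubleVanishing k (p i).rep ↔ ∀ w, dirDeriv (v i) w f = 0 := by
    obtain ⟨a, ha⟩ := hp i
    rw [← ha, Units.smul_def, mem_doubleVanishing_smul_iff hf a.ne_zero,
      mem_doubleVanishing_iff_dirDeriv hf hd]
  rw [h0, ← Submodule.finrank_map_subtype_eq]
  suffices homogeneousSubmodule (Fin (n + 1)) k d ⊓ ⨅ q ∈ T.map p, doubleVanishing k q.rep =
      (LinearMap.range (tangentSum d fun t : T => v t)).dualCoannihilator.map
        (homogeneousSubmodule (Fin (n + 1)) k d).subtype by rw [this]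
  ext f
  simp only [Submodule.mem_inf, Submodule.mem_iInf, Finset.forall_mem_map, Submodule.mem_map,
    mem_dualCoannihilator_range_tangentSum, Submodule.subtype_apply, Subtype.exists,
    exists_and_right, exists_eq_right, Subtype.forall, exists_prop]
  exact and_congr_right fun hf => forall₂_congr fun i _ => hmem hf i

theorem h1_map_eq_finrank_ker (hp : HasCoordinates p v) (hd : (d : k) ≠ 0) (T : Finset ι) :
    h1 k n d (T.map p) =
      Module.finrank k (LinearMap.ker (tangentSum d fun t : T => v t)) := by
  have : Module.Finite k (homogeneousSubmodule (Fin (n + 1)) k d) :=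
    Module.Finite.iff_fg.mpr (homogeneousSubmodule_fg _ _ d)
  have hrank := LinearMap.finrank_range_add_finrank_ker (tangentSum d fun t : T => v t)
  have hcorank := Subspace.finrank_add_finrank_dualCoannihilator_eq
    (LinearMap.range (tangentSum d fun t : T => v t))
  rw [Module.finrank_pi_fintype, Finset.sum_const, Finset.card_univ, Fintype.card_coe,
    Module.finrank_fin_fun, smul_eq_mul] at hrank
  rw [finrank_homogeneousSubmodule, ← h0_map_eq_finrank hp hd] at hcorank
  rw [h1, Finset.card_map]
  zify at hrank hcorank
  linarith

/-- The directions `c t` at the vectors `v t`, `t ∈ T`, satisfy a linear relation between the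
tangent spaces of the degree `d` Veronese variety. Values of `c` outside `T` are irrelevant. -/
def IsTangentRelation (d : ℕ) (v : ι → Fin n → k) (T : Finset ι) (c : ι → Fin n → k) : Prop :=
  ∀ f : MvPolynomial (Fin n) k, f.IsHomogeneous d → ∑ t ∈ T, dirDeriv (v t) (c t) f = 0

lemma isTangentRelation_iff_tangentSum_eq_zero {v c : ι → Fin n → k} {T : Finset ι} :
    IsTangentRelation d v T c ↔ tangentSum d (fun t : T => v t) (fun t => c t) = 0 := by
  simp only [IsTangentRelation, LinearMap.ext_iff, tangentSum_apply, Subtype.forall,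
    mem_homogeneousSubmodule, LinearMap.zero_apply]
  exact forall₂_congr fun f _ => by rw [Finset.sum_coe_sort T fun t => dirDeriv (v t) (c t) f]

theorem h1_map_eq_zero_iff (hp : HasCoordinates p v) (hd : (d : k) ≠ 0) {T : Finset ι} :
    h1 k n d (T.map p) = 0 ↔ ∀ c, IsTangentRelation d v T c → ∀ t ∈ T, c t = 0 := by
  rw [h1_map_eq_finrank_ker hp hd, Nat.cast_eq_zero, Submodule.finrank_eq_zero,
    LinearMap.ker_eq_bot']
  constructor
  · intro h c hc t ht
    exact congrFun (h _ (isTangentRelation_iff_tangentSum_eq_zero.mp hc)) ⟨t, ht⟩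
  · intro h c hc
    obtain ⟨c, rfl⟩ : ∃ c' : ι → Fin (n + 1) → k, (fun t : T => c' t) = c :=
      ⟨_, Function.extend_comp Subtype.val_injective c 0⟩
    funext t
    exact h c (isTangentRelation_iff_tangentSum_eq_zero.mpr hc) t t.2

lemma h1_map_pos_iff (hp : HasCoordinates p v) (hd : (d : k) ≠ 0) {T : Finset ι} :
    0 < h1 k n d (T.map p) ↔ ∃ c, IsTangentRelation d v T c ∧ ∃ t ∈ T, c t ≠ 0 := by
  have hnonneg : 0 ≤ h1 k n d (T.map p) := h1_map_eq_finrank_ker hp hd T ▸ Int.natCast_nonneg _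
  rw [hnonneg.lt_iff_ne', Ne, h1_map_eq_zero_iff hp hd]
  push Not
  rfl

lemma IsTangentRelation.dirDeriv_eq_zero {v c : ι → Fin n → k} {T : Finset ι} {e m : ℕ}
    (hc : IsTangentRelation (m + e) v T c) {f q : MvPolynomial (Fin n) k}
    (hf : f.IsHomogeneous m) (hq : q.IsHomogeneous e) (hqT : ∀ t ∈ T, eval (v t) q = 0)
    {s : ι} (hs : s ∈ T) (hfs : eval (v s) f ≠ 0) (hfT : ∀ t ∈ T, t ≠ s → eval (v t) f = 0) :
    dirDeriv (v s) (c s) q = 0 := by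
  have hsum : ∑ t ∈ T, eval (v t) f * dirDeriv (v t) (c t) q = 0 := by
    rw [← hc _ (hf.mul hq)]
    exact Finset.sum_congr rfl fun t ht => by rw [dirDeriv_mul, hqT t ht, zero_mul, add_zero]
  rw [Finset.sum_eq_single_of_mem s hs fun t ht hts => by rw [hfT t ht hts, zero_mul]] at hsum
  exact (mul_eq_zero.mp hsum).resolve_left hfs

end TangentRelations

section PolynomialInterpolation

variable {k : Type*} [Field k]

lemma eq_zero_of_forall_sum_eval_add_eval_derivative_eq_zero {T : Finset k} {a b : k → k}
    (h : ∀ P : k[X], P.natDegree < 2 * T.card →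
      ∑ t ∈ T, (a t * P.eval t + b t * (Polynomial.derivative P).eval t) = 0)
    {s : k} (hs : s ∈ T) : a s = 0 ∧ b s = 0 := by
  classical
  set W : k[X] := Lagrange.nodal (T.erase s) id ^ 2 with hW
  have hWdeg : W.natDegree + 2 = 2 * T.card := by
    rw [hW, Polynomial.natDegree_pow, Lagrange.natDegree_nodal, ← Finset.card_erase_add_one hs]
    ring
  have hWs : W.eval s ≠ 0 := by
    rw [hW, Polynomial.eval_pow]
    exact pow_ne_zero 2
      (Lagrange.eval_nodal_not_at_node fun r hr => (Finset.ne_of_mem_erase hr).symm)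
  have hWT (t : k) (ht : t ∈ T) (hts : t ≠ s) :
      W.eval t = 0 ∧ (Polynomial.derivative W).eval t = 0 := by
    have hnode : (Lagrange.nodal (T.erase s) id).eval t = 0 :=
      Lagrange.eval_nodal_at_node (v := id) (Finset.mem_erase.mpr ⟨hts, ht⟩)
    simp [hW, Polynomial.derivative_pow, hnode]
  have hb : b s = 0 := by
    have hdeg : (W * (Polynomial.X - Polynomial.C s)).natDegree ≤ W.natDegree + 1 :=
      Polynomial.natDegree_mul_le.trans_eq (by rw [Polynomial.natDegree_X_sub_C])
    have hsum := h (W * (Polynomial.X - Polynomial.C s)) (by lia)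
    rw [Finset.sum_eq_single_of_mem s hs fun t ht hts => by simp [hWT t ht hts]] at hsum
    simpa [hWs] using hsum
  have hsum := h W (by lia)
  rw [Finset.sum_eq_single_of_mem s hs fun t ht hts => by simp [hWT t ht hts]] at hsum
  exact ⟨by simpa [hb, hWs] using hsum, hb⟩

lemma sum_nthRootsFinset_pow {N : ℕ} (hN : 0 < N) {z : k} (hz : IsPrimitiveRoot z N) (j : ℕ) :
    ∑ t ∈ Polynomial.nthRootsFinset N (1 : k), t ^ j = if N ∣ j then (N : k) else 0 := by
  have hpowers : ∑ t ∈ Polynomial.nthRootsFinset N (1 : k), t ^ j =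
      ∑ i ∈ Finset.range N, (z ^ j) ^ i := by
    symm
    refine Finset.sum_nbij (z ^ ·) (fun i _ => ?_) hz.injOn_pow (fun t ht => ?_)
      fun i _ => pow_right_comm z j i
    · rw [Polynomial.mem_nthRootsFinset hN, pow_right_comm, hz.pow_eq_one, one_pow]
    · have : NeZero N := NeZero.of_pos hN
      obtain ⟨i, hi, rfl⟩ :=
        hz.eq_pow_of_pow_eq_one ((Polynomial.mem_nthRootsFinset hN 1).mp ht)
      exact ⟨i, Finset.mem_coe.mpr (Finset.mem_range.mpr hi), rfl⟩
  rw [hpowers]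
  split_ifs with h
  · simp [(hz.pow_eq_one_iff_dvd j).mpr h]
  · have hne : z ^ j - 1 ≠ 0 := sub_ne_zero.mpr fun hj => h ((hz.pow_eq_one_iff_dvd j).mp hj)
    apply mul_left_cancel₀ hne
    rw [mul_geom_sum, pow_right_comm, hz.pow_eq_one, one_pow, sub_self, mul_zero]

lemma sum_nthRootsFinset_eval {N : ℕ} (hN : 0 < N) {z : k} (hz : IsPrimitiveRoot z N)
    {P : k[X]} (hP : P.natDegree ≤ 2 * N) :
    ∑ t ∈ Polynomial.nthRootsFinset N (1 : k), P.eval t =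
      N * (P.coeff 0 + P.coeff N + P.coeff (2 * N)) := by
  have hmultiples : (Finset.range (2 * N + 1)).filter (N ∣ ·) = {0, N, 2 * N} := by
    ext j
    simp only [Finset.mem_filter, Finset.mem_range, Finset.mem_insert, Finset.mem_singleton]
    constructor
    · rintro ⟨hj, m, rfl⟩
      have hm : m < 3 := by nlinarith
      interval_cases m <;> lia
    · rintro (rfl | rfl | rfl) <;> simp [hN]
  calc ∑ t ∈ Polynomial.nthRootsFinset N (1 : k), P.eval t
      = ∑ j ∈ Finset.range (2 * N + 1),
          P.coeff j * ∑ t ∈ Polynomial.nthRootsFinset N (1 : k), t ^ j := by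
        simp only [Polynomial.eval_eq_sum_range' (Nat.lt_succ_of_le hP), Finset.mul_sum]
        exact Finset.sum_comm
    _ = ∑ j ∈ {0, N, 2 * N}, P.coeff j * N := by
        simp only [sum_nthRootsFinset_pow hN hz, mul_ite, mul_zero, ← hmultiples,
          Finset.sum_filter]
    _ = N * (P.coeff 0 + P.coeff N + P.coeff (2 * N)) := by
        rw [Finset.sum_insert (by simp; lia), Finset.sum_insert (by simp; lia),
          Finset.sum_singleton]
        ring

/-- The residue theorem for `P / (X ^ N - 1) ^ 2 * dX / X`, where the equality of the extreme
coefficients makes the residues at `0` and `∞` cancel. -/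
lemma sum_nthRootsFinset_mul_eval_derivative_sub_eq_zero {N : ℕ} (hN : 0 < N) {z : k}
    (hz : IsPrimitiveRoot z N) {P : k[X]} (hP : P.natDegree ≤ 2 * N)
    (hcoeff : P.coeff 0 = P.coeff (2 * N)) :
    ∑ t ∈ Polynomial.nthRootsFinset N (1 : k),
      (t * (Polynomial.derivative P).eval t - N * P.eval t) = 0 := by
  set Q : k[X] := Polynomial.X * Polynomial.derivative P - Polynomial.C (N : k) * P with hQ
  have hQcoeff (j : ℕ) : Q.coeff j = (j - N) * P.coeff j := by
    cases j with
    | zero => simp [hQ]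
    | succ j =>
      simp only [hQ, Polynomial.coeff_sub, Polynomial.coeff_X_mul, Polynomial.coeff_derivative,
        Polynomial.coeff_C_mul, Nat.cast_succ]
      ring
  have hQdeg : Q.natDegree ≤ 2 * N := Polynomial.natDegree_le_iff_coeff_eq_zero.mpr fun j hj => by
    rw [hQcoeff, Polynomial.coeff_eq_zero_of_natDegree_lt (hP.trans_lt hj), mul_zero]
  calc ∑ t ∈ Polynomial.nthRootsFinset N (1 : k),
        (t * (Polynomial.derivative P).eval t - N * P.eval t)
      = ∑ t ∈ Polynomial.nthRootsFinset N (1 : k), Q.eval t := by simp [hQ]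
    _ = N * (Q.coeff 0 + Q.coeff N + Q.coeff (2 * N)) :=
        sum_nthRootsFinset_eval hN hz hQdeg
    _ = 0 := by
        simp only [hQcoeff, hcoeff]
        push_cast
        ring

end PolynomialInterpolation

section CurveRestriction

lemma exists_isHomogeneous_aeval_eq_iff {R A σ : Type*} [CommSemiring R] [CommSemiring A]
    [Algebra R A] {γ : σ → A} {m : ℕ} {P : A} :
    (∃ f : MvPolynomial σ R, f.IsHomogeneous m ∧ aeval γ f = P) ↔
      P ∈ Submodule.span R (Set.range γ) ^ m := by
  have hspan : Submodule.span R (Set.range γ) =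
      (homogeneousSubmodule σ R 1).map (aeval γ).toLinearMap := by
    simp [homogeneousSubmodule_one_eq_span_X, Submodule.map_span, ← Set.range_comp,
      Function.comp_def]
  rw [hspan, ← Submodule.map_pow, homogeneousSubmodule_one_pow]
  rfl

variable {k : Type*} [Field k]

lemma span_curvePoint_image_eq_top {σ : Type*} [Finite σ] {γ : σ → k[X]}
    (hγ : LinearIndependent k γ) {e : ℕ} (hdeg : ∀ i, (γ i).natDegree ≤ e) {T : Finset k}
    (hT : e < T.card) : Submodule.span k (curvePoint γ '' T) = ⊤ := by
  classical
  have := Fintype.ofFinite σ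
  by_contra hne
  obtain ⟨φ, hφ, hle⟩ := Submodule.exists_le_ker_of_lt_top _ (lt_top_iff_ne_top.mpr hne)
  have hφ_apply (v : σ → k) : φ v = ∑ i, φ (Pi.single i 1) * v i := by
    conv_lhs => rw [pi_eq_sum_univ' v]
    simp [mul_comm]
  have hsum : ∑ i, φ (Pi.single i 1) • γ i = 0 := by
    refine Polynomial.eq_zero_of_natDegree_lt_card_of_eval_eq_zero' _ T (fun t ht => ?_) ?_
    · have hφt : φ (curvePoint γ t) = 0 := hle (Submodule.subset_span ⟨t, ht, rfl⟩)
      rw [hφ_apply] at hφt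
      simpa [Polynomial.eval_finsetSum, curvePoint] using hφt
    · exact (Polynomial.natDegree_sum_le_of_forall_le _ _ fun i _ =>
        (Polynomial.natDegree_smul_le _ _).trans (hdeg i)).trans_lt hT
  refine hφ (LinearMap.ext fun v => ?_)
  simp [hφ_apply v, Fintype.linearIndependent_iff.mp hγ _ hsum]

lemma spans_map_iff {ι : Type*} {n : ℕ} {p : ι ↪ ProjSpace k n} {v : ι → Fin (n + 1) → k}
    (hp : HasCoordinates p v) {T : Finset ι} :
    Spans k n (T.map p) ↔ Submodule.span k (v '' T) = ⊤ := by
  choose a ha using hp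
  simp_rw [Spans, Finset.coe_map, Set.image_image, ← ha]
  rw [Submodule.span_eq_iSup_of_singleton_spans, Submodule.span_eq_iSup_of_singleton_spans]
  simp_rw [iSup_image, Submodule.span_singleton_group_smul_eq]

end CurveRestriction

section NodalQuartic

variable {k : Type*} [Field k]

/-- Coordinates of the nodal quartic `t ↦ (1 + t ^ 4 : t : t ^ 2 : t ^ 3)`, the complete
intersection of the quadrics `x₁ x₃ = x₂ ^ 2` and `x₀ x₂ = x₁ ^ 2 + x₃ ^ 2`. The parameters
`0` and `∞` map to the node; it degenerates an elliptic normal quartic. -/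
noncomputable def quartic : Fin 4 → k[X] :=
  ![1 + Polynomial.X ^ 4, Polynomial.X, Polynomial.X ^ 2, Polynomial.X ^ 3]

lemma curvePoint_quartic (t : k) : curvePoint quartic t = ![1 + t ^ 4, t, t ^ 2, t ^ 3] := by
  ext i
  fin_cases i <;> simp [curvePoint, quartic]

lemma curveVelocity_quartic (t : k) :
    curveVelocity quartic t = ![4 * t ^ 3, 1, 2 * t, 3 * t ^ 2] := by
  ext i
  fin_cases i <;> norm_num [curveVelocity, curvePoint, quartic]

lemma natDegree_quartic_le (i : Fin 4) : (quartic i : k[X]).natDegree ≤ 4 := by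
  fin_cases i <;> simp only [quartic, Matrix.cons_val, Fin.reduceFinMk] <;> compute_degree!

lemma linearIndependent_quartic : LinearIndependent k (quartic (k := k)) := by
  rw [Fintype.linearIndependent_iff]
  intro a ha i
  have hcoeff (j : ℕ) := congrArg (Polynomial.coeff · j) ha
  simp only [Fin.sum_univ_four, quartic, Matrix.cons_val, Polynomial.coeff_add,
    Polynomial.coeff_smul, Polynomial.coeff_X_pow, Polynomial.coeff_one, Polynomial.coeff_X,
    Polynomial.coeff_zero] at hcoeff
  fin_cases i
  · simpa using hcoeff 0
  · simpa using hcoeff 1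
  · simpa using hcoeff 2
  · simpa using hcoeff 3

lemma curvePoint_quartic_ne_zero (t : k) : curvePoint quartic t ≠ 0 := by
  intro h
  have h0 : 1 + t ^ 4 = 0 := by simpa [curvePoint_quartic] using congrFun h 0
  have h1 : t = 0 := by simpa [curvePoint_quartic] using congrFun h 1
  simp [h1] at h0

lemma eq_of_smul_curvePoint_quartic_eq {a s t : k}
    (h : a • curvePoint quartic t = curvePoint quartic s) : s = t := by
  have h0 : a * (1 + t ^ 4) = 1 + s ^ 4 := by simpa [curvePoint_quartic] using congrFun h 0
  have h1 : a * t = s := by simpa [curvePoint_quartic] using congrFun h 1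
  have h2 : a * t ^ 2 = s ^ 2 := by simpa [curvePoint_quartic] using congrFun h 2
  have hcases : a * (a - 1) * t ^ 2 = 0 := by linear_combination (s + a * t) * h1 - h2
  rcases (by simpa [sub_eq_zero] using hcases : (a = 0 ∨ a = 1) ∨ t = 0) with (rfl | rfl) | rfl
  · simp [← h1] at h0
  · simpa using h1.symm
  · simpa using h1.symm

/-- The point of the nodal quartic with parameter `t`. -/
noncomputable def quarticPoint : k ↪ ProjSpace k 3 where
  toFun t := Projectivization.mk k (curvePoint quartic t) (curvePoint_quartic_ne_zero t)
  inj' _ _ h :=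
    have ⟨_, ha⟩ := (Projectivization.mk_eq_mk_iff' k _ _ _ _).mp h
    eq_of_smul_curvePoint_quartic_eq ha

lemma hasCoordinates_quarticPoint :
    HasCoordinates (quarticPoint (k := k)) (curvePoint quartic) :=
  fun _ => Projectivization.exists_smul_eq_mk_rep k _ _

lemma X_pow_mem_span_quartic_pow {m j : ℕ} (hj : 0 < j) (hjm : j < 4 * m) :
    (Polynomial.X : k[X]) ^ j ∈ Submodule.span k (Set.range quartic) ^ m := by
  induction m generalizing j with
  | zero => lia
  | succ m ih =>
    have hmul (i : Fin 4) {P : k[X]} (hP : P ∈ Submodule.span k (Set.range quartic) ^ m) :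
        quartic i * P ∈ Submodule.span k (Set.range quartic) ^ (m + 1) :=
      pow_succ' (Submodule.span k (Set.range (quartic (k := k)))) m ▸
        Submodule.mul_mem_mul (Submodule.subset_span ⟨i, rfl⟩) hP
    obtain rfl | hm := m.eq_zero_or_pos
    · have hone (i : Fin 4) := hmul i (P := 1) (by rw [pow_zero]; exact Submodule.one_le.mp le_rfl)
      interval_cases j
      · simpa [quartic] using hone 1
      · simpa [quartic] using hone 2
      · simpa [quartic] using hone 3
    have hmid {l : ℕ} (hl : 2 ≤ l) (hlm : l ≤ 4 * m + 2) :
        (Polynomial.X : k[X]) ^ l ∈ Submodule.span k (Set.range quartic) ^ (m + 1) := by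
      obtain hlm | hlm := le_or_gt l (4 * m)
      · obtain ⟨l, rfl⟩ := Nat.exists_eq_add_of_le' (show 1 ≤ l by lia)
        simpa [quartic, pow_succ'] using hmul 1 (ih (j := l) (by lia) (by lia))
      · obtain ⟨l, rfl⟩ := Nat.exists_eq_add_of_le (show 3 ≤ l by lia)
        simpa [quartic, pow_add] using hmul 3 (ih (j := l) (by lia) (by lia))
    have hends {l : ℕ} (hl : 0 < l) (hlm : l < 4 * m) : (Polynomial.X : k[X]) ^ l +
        Polynomial.X ^ (l + 4) ∈ Submodule.span k (Set.range quartic) ^ (m + 1) := by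
      convert hmul 0 (ih hl hlm) using 1
      simp only [quartic, Matrix.cons_val]
      ring
    obtain rfl | hj2 : j = 1 ∨ 2 ≤ j := by lia
    · exact (Submodule.add_mem_iff_left _ (hmid (by lia) (by lia))).mp (hends hj (by lia))
    obtain hjm2 | hjm2 := le_or_gt j (4 * m + 2)
    · exact hmid hj2 hjm2
    · obtain ⟨l, rfl⟩ := Nat.exists_eq_add_of_le' (show 4 ≤ j by lia)
      exact (Submodule.add_mem_iff_right _ (hmid (by lia) (by lia))).mp
        (hends (by lia) (by lia))

lemma exists_isHomogeneous_aeval_quartic_eq_X_mul {m : ℕ} {P : k[X]}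
    (hP : P.natDegree + 1 < 4 * m) :
    ∃ f : MvPolynomial (Fin 4) k, f.IsHomogeneous m ∧ aeval quartic f = Polynomial.X * P := by
  rw [exists_isHomogeneous_aeval_eq_iff, P.as_sum_range_C_mul_X_pow, Finset.mul_sum]
  refine Submodule.sum_mem _ fun j hj => ?_
  have hmem : (Polynomial.X : k[X]) ^ (j + 1) ∈ Submodule.span k (Set.range quartic) ^ m :=
    X_pow_mem_span_quartic_pow j.succ_pos (by have := Finset.mem_range.mp hj; lia)
  rw [mul_left_comm, ← pow_succ', ← Polynomial.smul_eq_C_mul]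
  exact Submodule.smul_mem _ _ hmem

lemma natDegree_le_and_coeff_eq_of_mem_span_quartic {P : k[X]}
    (hP : P ∈ Submodule.span k (Set.range quartic)) :
    P.natDegree ≤ 4 ∧ P.coeff 0 = P.coeff 4 := by
  induction hP using Submodule.span_induction with
  | mem P hP =>
    obtain ⟨i, rfl⟩ := hP
    refine ⟨natDegree_quartic_le i, ?_⟩
    fin_cases i <;> simp [quartic, Polynomial.coeff_one, Polynomial.coeff_X]
  | zero => simp
  | add P Q _ _ ihP ihQ =>
    exact ⟨Polynomial.natDegree_add_le_of_degree_le ihP.1 ihQ.1, by simp [ihP.2, ihQ.2]⟩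
  | smul a P _ ih =>
    exact ⟨(Polynomial.natDegree_smul_le a P).trans ih.1, by simp [ih.2]⟩

lemma natDegree_le_and_coeff_eq_of_mem_span_quartic_pow {m : ℕ} {P : k[X]}
    (hP : P ∈ Submodule.span k (Set.range quartic) ^ m) :
    P.natDegree ≤ 4 * m ∧ P.coeff 0 = P.coeff (4 * m) := by
  induction hP using Submodule.pow_induction_on_left' with
  | algebraMap r => simp
  | add P Q i _ _ ihP ihQ =>
    exact ⟨Polynomial.natDegree_add_le_of_degree_le ihP.1 ihQ.1, by simp [ihP.2, ihQ.2]⟩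
  | mem_mul P hP i Q _ ih =>
    have hP' := natDegree_le_and_coeff_eq_of_mem_span_quartic hP
    rw [Nat.mul_succ, add_comm]
    refine ⟨Polynomial.natDegree_mul_le_of_le hP'.1 ih.1, ?_⟩
    rw [Polynomial.mul_coeff_zero, Polynomial.coeff_mul_add_eq_of_natDegree_le hP'.1 ih.1, hP'.2,
      ih.2]

lemma exists_separating_form_quartic {m : ℕ} {T : Finset k} (hT : T.card < 4 * m) {s : k}
    (hs : s ∈ T) (hs0 : s ≠ 0) :
    ∃ f : MvPolynomial (Fin 4) k, f.IsHomogeneous m ∧ eval (curvePoint quartic s) f ≠ 0 ∧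
      ∀ t ∈ T, t ≠ s → eval (curvePoint quartic t) f = 0 := by
  classical
  have hdeg : (Lagrange.nodal (T.erase s) id : k[X]).natDegree + 1 < 4 * m := by
    rwa [Lagrange.natDegree_nodal, Finset.card_erase_add_one hs]
  obtain ⟨f, hf, hfP⟩ := exists_isHomogeneous_aeval_quartic_eq_X_mul hdeg
  refine ⟨f, hf, ?_, fun t ht hts => ?_⟩
  · rw [← eval_aeval_polynomial, hfP, Polynomial.eval_mul, Polynomial.eval_X]
    exact mul_ne_zero hs0
      (Lagrange.eval_nodal_not_at_node fun r hr => (Finset.ne_of_mem_erase hr).symm)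
  · have hnode : (Lagrange.nodal (T.erase s) id).eval t = 0 :=
      Lagrange.eval_nodal_at_node (v := id) (Finset.mem_erase.mpr ⟨hts, ht⟩)
    rw [← eval_aeval_polynomial, hfP, Polynomial.eval_mul, hnode, mul_zero]

lemma exists_eq_smul_add_smul_of_dirDeriv_quadrics_eq_zero {t : k} (ht : t ≠ 0) {w : Fin 4 → k}
    (hw₁ : dirDeriv (curvePoint quartic t) w (X 1 * X 3 - X 2 ^ 2) = 0)
    (hw₂ : dirDeriv (curvePoint quartic t) w (X 0 * X 2 - X 1 ^ 2 - X 3 ^ 2) = 0) :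
    ∃ a b : k, w = a • curvePoint quartic t + b • curveVelocity quartic t := by
  simp only [curvePoint_quartic, map_sub, pow_two, dirDeriv_mul, dirDeriv_X, eval_X,
    Matrix.cons_val] at hw₁ hw₂
  have hw3 : w 3 = 2 * t * w 2 - t ^ 2 * w 1 := by
    apply mul_left_cancel₀ ht
    linear_combination hw₁
  have hw0 : w 0 = (2 * t * w 1 - (1 + t ^ 4) * w 2 + 2 * t ^ 3 * w 3) / t ^ 2 := by
    rw [eq_div_iff (pow_ne_zero 2 ht)]
    linear_combination hw₂
  refine ⟨(2 * t * w 1 - w 2) / t ^ 2, (w 2 - t * w 1) / t, ?_⟩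
  rw [curvePoint_quartic, curveVelocity_quartic]
  ext i
  fin_cases i <;>
    simp only [Fin.zero_eta, Fin.mk_one, Fin.reduceFinMk, Pi.add_apply, Pi.smul_apply, smul_eq_mul,
      Matrix.cons_val, hw0, hw3] <;>
    field_simp <;> ring

theorem IsTangentRelation.exists_eq_smul_add_smul_quartic {d : ℕ} {T : Finset k}
    (hT0 : 0 ∉ T) (hT : T.card < 4 * d) {c : k → Fin 4 → k}
    (hc : IsTangentRelation (d + 2) (curvePoint quartic) T c) {t : k} (ht : t ∈ T) :
    ∃ a b : k, c t = a • curvePoint quartic t + b • curveVelocity quartic t := by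
  have ht0 : t ≠ 0 := ne_of_mem_of_not_mem ht hT0
  obtain ⟨f, hf, hft, hfT⟩ := exists_separating_form_quartic hT ht ht0
  have hquadric {q : MvPolynomial (Fin 4) k} (hq : q.IsHomogeneous 2)
      (hvanish : ∀ s, eval (curvePoint quartic s) q = 0) :
      dirDeriv (curvePoint quartic t) (c t) q = 0 :=
    hc.dirDeriv_eq_zero hf hq (fun s _ => hvanish s) ht hft hfT
  have hX (i : Fin 4) : (X i : MvPolynomial (Fin 4) k).IsHomogeneous 1 := isHomogeneous_X k i
  have hXsq (i : Fin 4) : (X i ^ 2 : MvPolynomial (Fin 4) k).IsHomogeneous 2 :=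
    isHomogeneous_X_pow i 2
  refine exists_eq_smul_add_smul_of_dirDeriv_quadrics_eq_zero ht0 (hquadric ?_ fun s => ?_)
    (hquadric ?_ fun s => ?_)
  · exact ((hX 1).mul (hX 3)).sub (hXsq 2)
  · simp only [curvePoint_quartic, map_sub, map_mul, map_pow, eval_X, Matrix.cons_val]
    ring
  · exact (((hX 0).mul (hX 2)).sub (hXsq 1)).sub (hXsq 3)
  · simp only [curvePoint_quartic, map_sub, map_mul, map_pow, eval_X, Matrix.cons_val]
    ring

theorem IsTangentRelation.eq_zero_quartic {d : ℕ} (hd : (d : k) ≠ 0) (hd4 : 4 ≤ d) {T : Finset k}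
    (hT0 : 0 ∉ T) (hT : T.card < 2 * d) {c : k → Fin 4 → k}
    (hc : IsTangentRelation d (curvePoint quartic) T c) {t : k} (ht : t ∈ T) : c t = 0 := by
  have htangent : ∀ t ∈ T, ∃ a b : k,
      c t = a • curvePoint quartic t + b • curveVelocity quartic t := by
    obtain ⟨e, rfl⟩ : ∃ e, d = e + 2 := ⟨d - 2, by lia⟩
    exact fun t ht => hc.exists_eq_smul_add_smul_quartic hT0 (by lia) ht
  choose! a b hab using htangent
  have ht0 : t ≠ 0 := ne_of_mem_of_not_mem ht hT0
  have hrelation (Q : k[X]) (hQ : Q.natDegree < 2 * T.card) :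
      ∑ t ∈ T, ((d * a t * t + b t) * Q.eval t +
        b t * t * (Polynomial.derivative Q).eval t) = 0 := by
    obtain ⟨f, hf, hfQ⟩ : ∃ f : MvPolynomial (Fin 4) k, f.IsHomogeneous d ∧
        aeval quartic f = Polynomial.X * Q :=
      exists_isHomogeneous_aeval_quartic_eq_X_mul (by lia)
    rw [← hc f hf]
    refine Finset.sum_congr rfl fun t ht => ?_
    rw [hab t ht, dirDeriv_curvePoint quartic hf, hfQ]
    simp only [Polynomial.derivative_mul, Polynomial.derivative_X, Polynomial.eval_add,
      Polynomial.eval_mul, Polynomial.eval_X, one_mul]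
    ring
  obtain ⟨hat, hbt⟩ := eq_zero_of_forall_sum_eval_add_eval_derivative_eq_zero hrelation ht
  have hb : b t = 0 := (mul_eq_zero.mp hbt).resolve_right ht0
  have ha : a t = 0 := by simpa [hb, hd, ht0] using hat
  rw [hab t ht, ha, hb, zero_smul, zero_smul, add_zero]

theorem isTangentRelation_quartic {d : ℕ} (hd : 0 < d) {z : k} (hz : IsPrimitiveRoot z (2 * d)) :
    IsTangentRelation d (curvePoint quartic) (Polynomial.nthRootsFinset (2 * d) (1 : k))
      fun t => (-2 : k) • curvePoint quartic t + t • curveVelocity quartic t := by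
  intro f hf
  obtain ⟨hdeg, hcoeff⟩ := natDegree_le_and_coeff_eq_of_mem_span_quartic_pow
    ((exists_isHomogeneous_aeval_eq_iff (R := k)).mp ⟨f, hf, rfl⟩)
  have hresidue := sum_nthRootsFinset_mul_eval_derivative_sub_eq_zero (P := aeval quartic f)
    (by lia) hz (by lia) (by rw [hcoeff]; congr 1; lia)
  rw [← hresidue]
  refine Finset.sum_congr rfl fun t _ => ?_
  rw [dirDeriv_curvePoint quartic hf]
  push_cast
  ring

lemma spans_map_quarticPoint {T : Finset k} (hT : 4 < T.card) :
    Spans k 3 (T.map quarticPoint) :=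
  (spans_map_iff hasCoordinates_quarticPoint).mpr
    (span_curvePoint_image_eq_top linearIndependent_quartic natDegree_quartic_le hT)

lemma h1_map_quarticPoint_eq_zero {d : ℕ} (hd : (d : k) ≠ 0) (hd4 : 4 ≤ d)
    {T : Finset k} (hT0 : 0 ∉ T) (hT : T.card < 2 * d) : h1 k 3 d (T.map quarticPoint) = 0 :=
  (h1_map_eq_zero_iff hasCoordinates_quarticPoint hd).mpr fun _ hc _ ht =>
    hc.eq_zero_quartic hd hd4 hT0 hT ht

lemma h1_map_quarticPoint_nthRootsFinset_pos {d : ℕ} (hd : (d : k) ≠ 0) {z : k}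
    (hz : IsPrimitiveRoot z (2 * d)) :
    0 < h1 k 3 d ((Polynomial.nthRootsFinset (2 * d) (1 : k)).map quarticPoint) := by
  have hd0 : 0 < d := Nat.pos_of_ne_zero fun h => hd (by simp [h])
  refine (h1_map_pos_iff hasCoordinates_quarticPoint hd).mpr
    ⟨_, isTangentRelation_quartic hd0 hz, 1, Polynomial.one_mem_nthRootsFinset (by lia), ?_⟩
  intro h
  have hcoord := congrFun h 1
  norm_num [curvePoint_quartic, curveVelocity_quartic] at hcoord

end NodalQuartic

lemma eight_mul_lt_choose_three {d : ℕ} (hd : 4 ≤ d) : 8 * d < (3 + d).choose 3 := by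
  induction d, hd using Nat.le_induction with
  | base => decide
  | succ d hd ih =>
    have hstep : (7 : ℕ).choose 2 ≤ (3 + d).choose 2 := Nat.choose_le_choose 2 (by lia)
    have hseven : (7 : ℕ).choose 2 = 21 := by decide
    rw [← add_assoc, Nat.choose_succ_succ' (3 + d) 2]
    lia

end Terracini

open Terracini in
theorem minTerracini_P3_two_d_nonempty_general {k : Type*} [Field k] {d : ℕ} (hd : 4 ≤ d) {z : k}
    (hz : IsPrimitiveRoot z (2 * d)) : (minTerracini k 3 d (2 * d)).Nonempty := by
  have : NeZero (2 * d) := ⟨by lia⟩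
  have hdk : (d : k) ≠ 0 := fun h => hz.neZero'.out (by simp [h])
  set T := Polynomial.nthRootsFinset (2 * d) (1 : k)
  have hT0 : (0 : k) ∉ T := fun h => Polynomial.ne_zero_of_mem_nthRootsFinset one_ne_zero h rfl
  have hcard : T.card = 2 * d := hz.card_nthRootsFinset
  have hh1 : 0 < h1 k 3 d (T.map quarticPoint) := h1_map_quarticPoint_nthRootsFinset_pos hdk hz
  have hh0 : 0 < h0 k 3 d (T.map quarticPoint) := by
    have hbinom := eight_mul_lt_choose_three hd
    rw [h1, Finset.card_map, hcard] at hh1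
    push_cast at hh1
    lia
  refine ⟨T.map quarticPoint, ⟨by rw [Finset.card_map, hcard], spans_map_quarticPoint (by lia),
    hh0, hh1⟩, fun A hA => ?_⟩
  obtain ⟨U, hU, rfl⟩ := Finset.subset_map_iff.mp hA.subset
  have hUT : U.card < 2 * d := hcard ▸ Finset.card_lt_card (Finset.map_ssubset_map.mp hA)
  exact h1_map_quarticPoint_eq_zero hdk hd (fun h => hT0 (hU h)) hUT

/-- Example: for every `d ≥ 5` there exists a minimally Terracini set of `2d` points in
`P^3` with respect to `O(d)`; in particular the bound `x < 2d` in the emptiness theorem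
for `T(3,d;x)'` is sharp. -/
theorem minTerracini_P3_two_d_nonempty
    (k : Type*) [Field k] [IsAlgClosed k] [CharZero k]
    (d : ℕ) (hd : 5 ≤ d) :
    (minTerracini k 3 d (2 * d)).Nonempty := by
  have : NeZero ((2 * d : ℕ) : k) := ⟨Nat.cast_ne_zero.mpr (by lia)⟩
  obtain ⟨z, hz⟩ := HasEnoughRootsOfUnity.exists_primitiveRoot k (2 * d)
  exact minTerracini_P3_two_d_nonempty_general (by lia) hz
end
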